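/- Minimax lower bound with p = log m: There exist constants c₁, c₂ > 0 (depending only on the constant c) such that for every n ≥ 1, r ∈ {1,…,m}, ρ > 0, a > 0, setting δₙ⁽²⁾(r,ρ,a) := max_{l₀ ≤ l ≤ m} [ (a²·(min(r,l))·l/n) ∧ (ρ²/λ_l) ∧ ( (1/Q_{log m}²)·(a²·min(r,l)/l)·(1/log m) ) ], for every estimator Ŝₙ (a measurable map from (V×V×ℝ)ⁿ to 𝒮_V): sup_{P ∈ 𝒫_{r,ρ,a}} P^{⊗n}{ ‖Ŝₙ − S_P‖²_{L₂(Π²)} ≥ c₁·δₙ⁽²⁾(r,ρ,a) } ≥ c₂. -/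

import Mathlib

open MeasureTheory Finset
open scoped ENNReal NNReal

noncomputable section

/-- Sample space for one observation: a pair of vertices `(X, X')` and a response `Y`. -/
abbrev Obs (m : ℕ) := Fin m × Fin m × ℝ

/-- Squared Hilbert–Schmidt (Frobenius) norm of a kernel. -/
def hsNormSq {m : ℕ} (S : Matrix (Fin m) (Fin m) ℝ) : ℝ := ∑ u, ∑ v, (S u v) ^ 2

/-- Squared `L₂(Π²)` norm: `‖S‖²_{L₂(Π²)} = m⁻² ‖S‖₂²`. -/
def l2PiSq {m : ℕ} (S : Matrix (Fin m) (Fin m) ℝ) : ℝ := hsNormSq S / (m : ℝ) ^ 2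

/-- Squared Sobolev (Hilbert–Schmidt) norm `‖W^{1/2}S‖₂² = ∑ₖ λₖ ‖S φₖ‖²`,
expressed through the eigendata `(lam, φ)` of `W` (indexed by `1,…,m`). -/
def sobolevHSSq {m : ℕ} (lam : ℕ → ℝ) (φ : ℕ → Fin m → ℝ)
    (S : Matrix (Fin m) (Fin m) ℝ) : ℝ :=
  ∑ k ∈ Finset.Icc 1 m, lam k * ∑ u, (S.mulVec (φ k) u) ^ 2

/-- `φ₁,…,φ_m` are orthonormal in `ℝ^V` (Euclidean inner product). -/
def OrthonormalFamily (m : ℕ) (φ : ℕ → Fin m → ℝ) : Prop :=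
  ∀ j ∈ Finset.Icc 1 m, ∀ k ∈ Finset.Icc 1 m,
    (∑ v, φ j v * φ k v) = if j = k then (1 : ℝ) else 0

/-- Eigendata of the positive semidefinite kernel `W`: orthonormal eigenfunctions `φ`,
nonnegative nondecreasing eigenvalues `lam` (indexed by `1,…,m`), `k0` the smallest index
of a positive eigenvalue, and `λ_{k+1} ≤ c·λ_k` for `k ≥ k0`. -/
structure IsEigenData (m : ℕ) (c : ℝ) (lam : ℕ → ℝ) (φ : ℕ → Fin m → ℝ) (k0 : ℕ) : Prop where
  orth : OrthonormalFamily m φ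
  nonneg : ∀ k ∈ Finset.Icc 1 m, 0 ≤ lam k
  mono : ∀ k l : ℕ, 1 ≤ k → k ≤ l → l ≤ m → lam k ≤ lam l
  k0_mem : 1 ≤ k0 ∧ k0 ≤ m ∧ 0 < lam k0
  k0_min : ∀ k ∈ Finset.Icc 1 m, 0 < lam k → k0 ≤ k
  ratio : ∀ k : ℕ, k0 ≤ k → k + 1 ≤ m → lam (k + 1) ≤ c * lam k

/-- The design `(X, X')` is uniformly distributed on `V × V`. -/
def UniformDesign (m : ℕ) (P : Measure (Obs m)) : Prop :=
  ∀ u v : Fin m, P {z : Obs m | z.1 = u ∧ z.2.1 = v} = ((m : ℝ≥0∞) ^ 2)⁻¹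

/-- The regression kernel `S_P(u,v) = m²·E_P[Y·1{X=u, X'=v}] = E_P(Y | X=u, X'=v)`. -/
def regKernel (m : ℕ) (P : Measure (Obs m)) : Matrix (Fin m) (Fin m) ℝ :=
  Matrix.of fun u v =>
    (m : ℝ) ^ 2 * ∫ z : Obs m, (if z.1 = u ∧ z.2.1 = v then z.2.2 else 0) ∂P

/-- Membership in the class `𝒫_{r,ρ,a}` of sampling distributions. -/
def MemP (m : ℕ) (r : ℕ) (ρ a : ℝ) (lam : ℕ → ℝ) (φ : ℕ → Fin m → ℝ)
    (P : Measure (Obs m)) : Prop :=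
  IsProbabilityMeasure P ∧ UniformDesign m P ∧ (∀ᵐ z ∂P, |z.2.2| ≤ a) ∧
    (regKernel m P).IsSymm ∧ (regKernel m P).rank ≤ r ∧
    sobolevHSSq lam φ (regKernel m P) ≤ ρ ^ 2 * (m : ℝ) ^ 2


/-- `Q_p := max_{1≤j≤m} ‖√m·φ_j‖²_{L_p(Π)}`. -/
def Qp (m : ℕ) (p : ℝ) (φ : ℕ → Fin m → ℝ) : ℝ :=
  ⨆ j ∈ Finset.Icc 1 m, ((∑ v, |Real.sqrt m * φ j v| ^ p) / m) ^ (2 / p)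



/-- The quantity `δₙ⁽²⁾(r,ρ,a)` (with value in `ℝ≥0∞`, so that `ρ²/λ_l = ∞` when `λ_l = 0`). -/
def delta2 (m n r l0 : ℕ) (ρ a Q : ℝ) (lam : ℕ → ℝ) : ℝ≥0∞ :=
  ⨆ l ∈ Finset.Icc l0 m,
    min (ENNReal.ofReal (a ^ 2 * (min r l : ℝ) * (l : ℝ) / n))
      (min (ENNReal.ofReal (ρ ^ 2) / ENNReal.ofReal (lam l))
        (ENNReal.ofReal
          ((1 / Q ^ 2) * (a ^ 2 * (min r l : ℝ) / l) * (1 / Real.log m))))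

/-!
Fix a level `l` attaining the maximum `δₙ⁽²⁾`. The hard kernels are combinations of the products
`φ_j ⊗ φ_k`, `j, k ≤ l`, with a free choice of signs: a block of coefficients `±κ` together with its
transpose when the rank is at least `2`, and a multiple of `x ⊗ x` with
`x = φ₁ + l^{-1/2} ∑_{1 < j ≤ l} ±φ_j` when the rank is `1`. With `p = log m` one has
`m φ_j(v)² ≤ m^{2/p} Q_p = e² Q_p`, so by Hoeffding's inequality all but a quarter of the sign
choices give kernels bounded by `a / 2`; such a kernel is the regression function of a response
with values `±a`. Reversing one sign changes the `n`-fold law so little that the overlap of the two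
laws stays bounded below, and Assouad's argument, restricted to the good three quarters of the sign
cube, yields a law under which a fixed proportion of the signs is misread with fixed probability.
-/

/-! ### Rademacher sums over the sign cube -/

/-- The sign `±1` encoded by a Boolean; the sign cube is `ι → Bool`, so that its cardinality and
its decidable equality come for free. -/
def boolSign (b : Bool) : ℝ := if b then 1 else -1

lemma boolSign_sq (b : Bool) : boolSign b ^ 2 = 1 := by cases b <;> simp [boolSign]

lemma abs_boolSign (b : Bool) : |boolSign b| = 1 := by cases b <;> simp [boolSign]

lemma boolSign_not (b : Bool) : boolSign (!b) = -boolSign b := by cases b <;> simp [boolSign]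

section Hoeffding

variable {ι Y : Type*} [Fintype ι] [Fintype Y]

/-- The Rademacher sum `∑ᵢ ±xᵢ` with signs `σ`. Probabilities of events about it are expressed by
counting points of the sign cube. -/
def rademacherSum (x : ι → ℝ) (σ : ι → Bool) : ℝ := ∑ i, boolSign (σ i) * x i

lemma rademacherSum_smul (s : ℝ) (x : ι → ℝ) (σ : ι → Bool) :
    rademacherSum (s • x) σ = s * rademacherSum x σ := by
  simp only [rademacherSum, Finset.mul_sum, Pi.smul_apply, smul_eq_mul]
  exact Finset.sum_congr rfl fun i _ => by ring

lemma rademacherSum_neg (x : ι → ℝ) (σ : ι → Bool) :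
    rademacherSum (-x) σ = -rademacherSum x σ := by
  simp [rademacherSum]

variable [DecidableEq ι]

lemma sum_exp_rademacherSum_le (x : ι → ℝ) :
    ∑ σ, Real.exp (rademacherSum x σ) ≤
      2 ^ Fintype.card ι * Real.exp ((∑ i, x i ^ 2) / 2) := by
  have mgf_le : ∀ i, ∑ b, Real.exp (boolSign b * x i) ≤ 2 * Real.exp (x i ^ 2 / 2) := by
    intro i
    have hcosh := Real.cosh_le_exp_half_sq (x i)
    rw [Real.cosh_eq] at hcosh
    simp only [boolSign, Fintype.sum_bool, if_true, Bool.false_eq_true, if_false, one_mul,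
      neg_one_mul]
    linarith
  calc ∑ σ, Real.exp (rademacherSum x σ) = ∏ i, ∑ b, Real.exp (boolSign b * x i) := by
        rw [Finset.prod_univ_sum, Fintype.piFinset_univ]
        exact Finset.sum_congr rfl fun σ _ => Real.exp_sum _ _
    _ ≤ ∏ i, 2 * Real.exp (x i ^ 2 / 2) :=
        Finset.prod_le_prod (fun i _ => Finset.sum_nonneg fun b _ => (Real.exp_pos _).le)
          fun i _ => mgf_le i
    _ = 2 ^ Fintype.card ι * Real.exp ((∑ i, x i ^ 2) / 2) := by
        rw [Finset.prod_mul_distrib, Finset.prod_const, Finset.card_univ, Finset.sum_div,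
          Real.exp_sum]

lemma card_lt_rademacherSum_le {x : ι → ℝ} {V t : ℝ} (hV : 0 < V) (ht : 0 ≤ t)
    (hx : ∑ i, x i ^ 2 ≤ V) :
    (#{σ | t < rademacherSum x σ} : ℝ) ≤ 2 ^ Fintype.card ι * Real.exp (-(t ^ 2 / (2 * V))) := by
  -- Chernoff's bound, at the minimiser `s` of `s ^ 2 * V / 2 - s * t`
  set s := t / V with hs
  have : 0 ≤ s := by positivity
  have markov : #{σ | t < rademacherSum x σ} * Real.exp (s * t) ≤
      ∑ σ, Real.exp (rademacherSum (s • x) σ) := by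
    rw [← nsmul_eq_mul]
    refine (Finset.card_nsmul_le_sum _ _ _ fun σ hσ => ?_).trans
      (Finset.sum_le_sum_of_subset_of_nonneg (Finset.filter_subset _ _)
        fun σ _ _ => (Real.exp_pos _).le)
    have hlt : t < rademacherSum x σ := (Finset.mem_filter.1 hσ).2
    rw [rademacherSum_smul]
    gcongr
  have sq_sum_le : ∑ i, (s • x) i ^ 2 ≤ s ^ 2 * V := by
    simp only [Pi.smul_apply, smul_eq_mul, mul_pow, ← Finset.mul_sum]
    gcongr
  have exponent : s ^ 2 * V / 2 - s * t = -(t ^ 2 / (2 * V)) := by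
    rw [hs]; field_simp; ring
  calc (#{σ | t < rademacherSum x σ} : ℝ)
      ≤ 2 ^ Fintype.card ι * Real.exp (s ^ 2 * V / 2) / Real.exp (s * t) := by
        rw [le_div_iff₀ (Real.exp_pos _)]
        refine markov.trans ((sum_exp_rademacherSum_le _).trans ?_)
        gcongr
    _ = 2 ^ Fintype.card ι * Real.exp (-(t ^ 2 / (2 * V))) := by
        rw [mul_div_assoc, ← Real.exp_sub, exponent]

lemma card_lt_abs_rademacherSum_le {x : ι → ℝ} {V t : ℝ} (hV : 0 < V) (ht : 0 ≤ t)
    (hx : ∑ i, x i ^ 2 ≤ V) :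
    (#{σ | t < |rademacherSum x σ|} : ℝ) ≤
      2 * (2 ^ Fintype.card ι * Real.exp (-(t ^ 2 / (2 * V)))) := by
  have hsub : ({σ | t < |rademacherSum x σ|} : Finset (ι → Bool)) ⊆
      ({σ | t < rademacherSum x σ} : Finset (ι → Bool)) ∪
        ({σ | t < rademacherSum (-x) σ} : Finset (ι → Bool)) := by
    intro σ
    simp only [Finset.mem_filter, Finset.mem_union, Finset.mem_univ, true_and, rademacherSum_neg]
    exact lt_abs.1
  have hcard : (#{σ | t < |rademacherSum x σ|} : ℝ) ≤
      #{σ | t < rademacherSum x σ} + #{σ | t < rademacherSum (-x) σ} := by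
    exact_mod_cast (Finset.card_le_card hsub).trans (Finset.card_union_le _ _)
  have hpos := card_lt_rademacherSum_le hV ht hx
  have hneg := card_lt_rademacherSum_le (x := -x) hV ht (by simpa using hx)
  linarith

lemma card_exists_lt_abs_rademacherSum_le {x : Y → ι → ℝ} {V t : ℝ} (hV : 0 < V) (ht : 0 ≤ t)
    (hx : ∀ y, ∑ i, x y i ^ 2 ≤ V) :
    (#{σ | ∃ y, t < |rademacherSum (x y) σ|} : ℝ) ≤
      Fintype.card Y * (2 * (2 ^ Fintype.card ι * Real.exp (-(t ^ 2 / (2 * V))))) := by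
  have hsub : ({σ | ∃ y, t < |rademacherSum (x y) σ|} : Finset (ι → Bool)) ⊆
      Finset.univ.biUnion fun y => ({σ | t < |rademacherSum (x y) σ|} : Finset (ι → Bool)) := by
    intro σ hσ
    simpa using hσ
  calc (#{σ | ∃ y, t < |rademacherSum (x y) σ|} : ℝ)
      ≤ ∑ y, (#{σ | t < |rademacherSum (x y) σ|} : ℝ) := by
        exact_mod_cast (Finset.card_le_card hsub).trans Finset.card_biUnion_le
    _ ≤ Fintype.card Y • (2 * (2 ^ Fintype.card ι * Real.exp (-(t ^ 2 / (2 * V))))) :=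
        Finset.sum_le_card_nsmul _ _ _ fun y _ => card_lt_abs_rademacherSum_le hV ht (hx y)
    _ = _ := nsmul_eq_mul _ _

lemma four_mul_card_exists_lt_abs_rademacherSum_le {m : ℕ} (hm : 2 ≤ m)
    (hY : Fintype.card Y ≤ m ^ 2) {x : Y → ι → ℝ} {V t : ℝ} (hV : 0 < V) (ht : 0 ≤ t)
    (hx : ∀ y, ∑ i, x y i ^ 2 ≤ V) (hVt : 12 * Real.log m * V ≤ t ^ 2) :
    4 * #{σ | ∃ y, t < |rademacherSum (x y) σ|} ≤ 2 ^ Fintype.card ι := by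
  have hm2 : (2 : ℝ) ≤ m := by exact_mod_cast hm
  have hm0 : (0 : ℝ) < m := by linarith
  have hY' : (Fintype.card Y : ℝ) ≤ (m : ℝ) ^ 2 := by exact_mod_cast hY
  have exp_le : Real.exp (-(t ^ 2 / (2 * V))) ≤ ((m : ℝ) ^ 6)⁻¹ := by
    have hpow : ((m : ℝ) ^ 6)⁻¹ = Real.exp (-(6 * Real.log m)) := by
      rw [Real.exp_neg, ← Real.exp_log (pow_pos hm0 6), Real.log_pow, Nat.cast_ofNat]
    rw [hpow, Real.exp_le_exp, neg_le_neg_iff, le_div_iff₀ (by positivity)]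
    linarith
  have inv_le : (8 : ℝ) * (m ^ 2 * ((m : ℝ) ^ 6)⁻¹) ≤ 1 := by
    have hpow : (2 : ℝ) ^ 4 ≤ (m : ℝ) ^ 4 := by gcongr
    rw [show (8 : ℝ) * (m ^ 2 * ((m : ℝ) ^ 6)⁻¹) = 8 / m ^ 4 by field_simp,
      div_le_one (by positivity)]
    linarith
  have main : (4 : ℝ) * #{σ | ∃ y, t < |rademacherSum (x y) σ|} ≤ 2 ^ Fintype.card ι :=
    calc (4 : ℝ) * #{σ | ∃ y, t < |rademacherSum (x y) σ|}
        ≤ 4 * (m ^ 2 * (2 * (2 ^ Fintype.card ι * ((m : ℝ) ^ 6)⁻¹))) := by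
          have hcard := card_exists_lt_abs_rademacherSum_le hV ht hx
          refine mul_le_mul_of_nonneg_left (hcard.trans ?_) (by norm_num)
          gcongr
      _ = 2 ^ Fintype.card ι * (8 * (m ^ 2 * ((m : ℝ) ^ 6)⁻¹)) := by ring
      _ ≤ 2 ^ Fintype.card ι := mul_le_of_le_one_right (by positivity) inv_le
  exact_mod_cast main

end Hoeffding

/-! ### Assouad's lemma over a large part of the sign cube -/

section Assouad

variable {X : Type*} [Fintype X]

lemma sum_min_le_sum_ne_add_sum_ne_not (p q : X → ℝ) (test : X → Bool) (b : Bool) :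
    ∑ x, min (p x) (q x) ≤ ∑ x with test x ≠ b, p x + ∑ x with test x ≠ !b, q x := by
  rw [Finset.sum_filter, Finset.sum_filter, ← Finset.sum_add_distrib]
  refine Finset.sum_le_sum fun x _ => ?_
  by_cases htest : test x = b
  · simp [htest]
  · simp [Bool.eq_not_of_ne htest]

lemma le_sum_of_two_mul_le_sum_mul {p : X → ℝ} {N : X → ℕ} {K : ℕ} {t : ℝ} (ht : 0 ≤ t)
    (hp : ∀ x, 0 ≤ p x) (hsum : ∑ x, p x = 1) (hN : ∀ x, N x ≤ K)
    (hK : 0 < K) (hmean : 2 * t * K ≤ ∑ x, p x * N x) :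
    t ≤ ∑ x with t * K ≤ N x, p x := by
  have hK' : (0 : ℝ) < K := by exact_mod_cast hK
  have mul_le : ∀ x, p x * N x ≤ (if t * K ≤ N x then p x else 0) * K + p x * (t * K) := by
    intro x
    have hNx : (N x : ℝ) ≤ K := by exact_mod_cast hN x
    split_ifs with hx
    · exact (mul_le_mul_of_nonneg_left hNx (hp x)).trans
        (le_add_of_nonneg_right (mul_nonneg (hp x) (by positivity)))
    · rw [zero_mul, zero_add]
      exact mul_le_mul_of_nonneg_left (not_le.1 hx).le (hp x)
  have mean_le : ∑ x, p x * N x ≤ (∑ x with t * K ≤ N x, p x) * K + t * K := by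
    refine (Finset.sum_le_sum fun x _ => mul_le x).trans_eq ?_
    rw [Finset.sum_add_distrib, ← Finset.sum_mul, ← Finset.sum_mul, hsum, one_mul,
      Finset.sum_filter]
  exact le_of_mul_le_mul_right (by linarith) hK'

variable {ι : Type*} [DecidableEq ι]

/-- The sign vector `σ` with its `i`-th sign reversed. -/
def flipAt (i : ι) (σ : ι → Bool) : ι → Bool := Function.update σ i (!σ i)

lemma flipAt_self (i : ι) (σ : ι → Bool) : flipAt i σ i = !σ i := by simp [flipAt]

lemma flipAt_of_ne {i j : ι} (h : j ≠ i) (σ : ι → Bool) : flipAt i σ j = σ j := by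
  simp [flipAt, h]

lemma flipAt_flipAt (i : ι) (σ : ι → Bool) : flipAt i (flipAt i σ) = σ := by simp [flipAt]

variable [Fintype ι]

lemma sum_filter_flipAt_mem (G : Finset (ι → Bool)) (i : ι) (e : (ι → Bool) → ℝ) :
    ∑ σ ∈ G with flipAt i σ ∈ G, e (flipAt i σ) = ∑ σ ∈ G with flipAt i σ ∈ G, e σ := by
  have maps : ∀ σ ∈ G.filter (flipAt i · ∈ G), flipAt i σ ∈ G.filter (flipAt i · ∈ G) := by
    intro σ hσ
    simp only [Finset.mem_filter, flipAt_flipAt] at hσ ⊢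
    exact hσ.symm
  exact Finset.sum_nbij' (flipAt i) (flipAt i) maps maps (fun σ _ => flipAt_flipAt i σ)
    (fun σ _ => flipAt_flipAt i σ) fun σ _ => rfl

lemma card_le_card_filter_flipAt_mem_add (G : Finset (ι → Bool)) (i : ι) :
    #G ≤ #{σ ∈ G | flipAt i σ ∈ G} + #Gᶜ := by
  have hsub : G ⊆ {σ ∈ G | flipAt i σ ∈ G} ∪ Gᶜ.image (flipAt i) := by
    intro σ hσ
    simp only [Finset.mem_union, Finset.mem_filter, Finset.mem_image, Finset.mem_compl]
    by_cases hflip : flipAt i σ ∈ G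
    · exact Or.inl ⟨hσ, hflip⟩
    · exact Or.inr ⟨_, hflip, flipAt_flipAt i σ⟩
  exact (Finset.card_le_card hsub).trans
    ((Finset.card_union_le _ _).trans (Nat.add_le_add_left Finset.card_image_le _))

lemma mul_card_sub_le_two_mul_sum {G : Finset (ι → Bool)} {i : ι} {e : (ι → Bool) → ℝ} {α : ℝ}
    (hα : 0 ≤ α) (he : ∀ σ ∈ G, 0 ≤ e σ)
    (hpair : ∀ σ ∈ G, flipAt i σ ∈ G → α ≤ e σ + e (flipAt i σ)) :
    α * (#G - #Gᶜ) ≤ 2 * ∑ σ ∈ G, e σ := by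
  have hcard : (#G : ℝ) - #Gᶜ ≤ #{σ ∈ G | flipAt i σ ∈ G} := by
    rw [sub_le_iff_le_add]
    exact_mod_cast card_le_card_filter_flipAt_mem_add G i
  calc α * (#G - #Gᶜ) ≤ #{σ ∈ G | flipAt i σ ∈ G} • α := by
        rw [nsmul_eq_mul, mul_comm]
        gcongr
    _ ≤ ∑ σ ∈ G with flipAt i σ ∈ G, (e σ + e (flipAt i σ)) :=
        Finset.card_nsmul_le_sum _ _ _ fun σ hσ =>
          hpair σ (Finset.mem_filter.1 hσ).1 (Finset.mem_filter.1 hσ).2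
    _ = 2 * ∑ σ ∈ G with flipAt i σ ∈ G, e σ := by
        rw [Finset.sum_add_distrib, sum_filter_flipAt_mem, two_mul]
    _ ≤ 2 * ∑ σ ∈ G, e σ := by
        refine mul_le_mul_of_nonneg_left ?_ zero_le_two
        exact Finset.sum_le_sum_of_subset_of_nonneg (Finset.filter_subset _ _)
          fun σ hσ _ => he σ hσ

lemma exists_mul_card_le_sum_of_flipAt {G : Finset (ι → Bool)}
    (hG : 4 * #Gᶜ ≤ 2 ^ Fintype.card ι) {I : Finset ι} {e : (ι → Bool) → ι → ℝ} {α : ℝ}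
    (hα : 0 ≤ α) (he : ∀ σ ∈ G, ∀ i ∈ I, 0 ≤ e σ i)
    (hpair : ∀ σ ∈ G, ∀ i ∈ I, flipAt i σ ∈ G → α ≤ e σ i + e (flipAt i σ) i) :
    ∃ σ ∈ G, α / 4 * #I ≤ ∑ i ∈ I, e σ i := by
  have hcard : #G + #Gᶜ = 2 ^ Fintype.card ι := by
    rw [Finset.card_add_card_compl, Fintype.card_fun, Fintype.card_bool]
  have hGne : G.Nonempty := by
    rw [← Finset.card_pos]
    have : 0 < 2 ^ Fintype.card ι := by positivity
    omega
  have hhalf : (#G : ℝ) / 2 ≤ #G - #Gᶜ := by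
    have : (#G : ℝ) + #Gᶜ = 2 ^ Fintype.card ι := by exact_mod_cast hcard
    have : (4 : ℝ) * #Gᶜ ≤ 2 ^ Fintype.card ι := by exact_mod_cast hG
    linarith
  refine Finset.exists_le_of_sum_le hGne ?_
  rw [Finset.sum_comm, Finset.sum_const, ← nsmul_eq_mul', smul_smul, mul_comm, ← smul_smul]
  refine Finset.card_nsmul_le_sum _ _ _ fun i hi => ?_
  have hi_le := mul_card_sub_le_two_mul_sum hα (fun σ hσ => he σ hσ i hi)
    fun σ hσ => hpair σ hσ i hi
  have hmul := mul_le_mul_of_nonneg_left hhalf hα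
  rw [nsmul_eq_mul]
  linarith

-- For each `i`, at least half of the points of `G` have their `i`-th neighbour in `G` as well, so
-- averaging over `G` instead of the whole cube only costs a constant factor.
theorem assouad {G : Finset (ι → Bool)} (hG : 4 * #Gᶜ ≤ 2 ^ Fintype.card ι) {I : Finset ι}
    (hI : I.Nonempty) {f : (ι → Bool) → X → ℝ} {α : ℝ} (hα : 0 ≤ α)
    (hf : ∀ σ ∈ G, ∀ x, 0 ≤ f σ x) (hsum : ∀ σ ∈ G, ∑ x, f σ x = 1)
    (hmin : ∀ σ ∈ G, ∀ i ∈ I, flipAt i σ ∈ G → α ≤ ∑ x, min (f σ x) (f (flipAt i σ) x))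
    (est : X → ι → Bool) :
    ∃ σ ∈ G, α / 8 ≤ ∑ x with α / 8 * #I ≤ #{i ∈ I | est x i ≠ σ i}, f σ x := by
  obtain ⟨σ, hσ, hmean⟩ := exists_mul_card_le_sum_of_flipAt hG (I := I)
    (e := fun σ i => ∑ x with est x i ≠ σ i, f σ x) hα
    (fun σ hσ i _ => Finset.sum_nonneg fun x _ => hf σ hσ x) fun σ hσ i hi hflip => by
      have h := sum_min_le_sum_ne_add_sum_ne_not (f σ) (f (flipAt i σ)) (est · i) (σ i)
      rw [← flipAt_self] at h
      exact (hmin σ hσ i hi hflip).trans h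
  refine ⟨σ, hσ, le_sum_of_two_mul_le_sum_mul (by positivity) (hf σ hσ) (hsum σ hσ)
    (fun x => Finset.card_filter_le _ _) hI.card_pos ?_⟩
  calc 2 * (α / 8) * #I = α / 4 * #I := by ring
    _ ≤ ∑ i ∈ I, ∑ x with est x i ≠ σ i, f σ x := hmean
    _ = ∑ x, f σ x * #{i ∈ I | est x i ≠ σ i} := by
        simp only [Finset.sum_filter, Finset.card_filter, Nat.cast_sum, Nat.cast_ite,
          Nat.cast_one, Nat.cast_zero, Finset.mul_sum, mul_ite, mul_one, mul_zero]
        exact Finset.sum_comm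

end Assouad

/-! ### Affinity of product laws -/

section Affinity

variable {Z : Type*} [Fintype Z]

/-- The Bhattacharyya affinity `∑ √(p q)` of two densities on a finite set: it is multiplicative
over products and bounds the overlap `∑ min(p, q)` from below. -/
def affinity (p q : Z → ℝ) : ℝ := ∑ z, √(p z * q z)

lemma sq_affinity_le {p q : Z → ℝ} (hp : ∀ z, 0 ≤ p z) (hq : ∀ z, 0 ≤ q z)
    (hpsum : ∑ z, p z = 1) (hqsum : ∑ z, q z = 1) :
    affinity p q ^ 2 ≤ 2 * ∑ z, min (p z) (q z) := by
  have hmin : ∀ z, 0 ≤ min (p z) (q z) := fun z => le_min (hp z) (hq z)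
  have hmax : ∀ z, 0 ≤ max (p z) (q z) := fun z => le_max_of_le_left (hp z)
  have max_le : ∑ z, max (p z) (q z) ≤ 2 := by
    calc ∑ z, max (p z) (q z) ≤ ∑ z, (p z + q z) :=
          Finset.sum_le_sum fun z _ => max_le_add_of_nonneg (hp z) (hq z)
      _ = 2 := by rw [Finset.sum_add_distrib, hpsum, hqsum, one_add_one_eq_two]
  calc affinity p q ^ 2 = (∑ z, √(min (p z) (q z)) * √(max (p z) (q z))) ^ 2 := by
        simp only [affinity, ← Real.sqrt_mul (hmin _), min_mul_max]
    _ ≤ (∑ z, √(min (p z) (q z)) ^ 2) * ∑ z, √(max (p z) (q z)) ^ 2 :=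
        Finset.sum_mul_sq_le_sq_mul_sq _ _ _
    _ = (∑ z, min (p z) (q z)) * ∑ z, max (p z) (q z) := by
        simp only [Real.sq_sqrt (hmin _), Real.sq_sqrt (hmax _)]
    _ ≤ 2 * ∑ z, min (p z) (q z) := by
        rw [mul_comm]
        exact mul_le_mul_of_nonneg_right max_le (Finset.sum_nonneg fun z _ => hmin z)

lemma affinity_prod {p q : Z → ℝ} (hp : ∀ z, 0 ≤ p z) (hq : ∀ z, 0 ≤ q z) (n : ℕ) :
    affinity (fun x : Fin n → Z => ∏ t, p (x t)) (fun x => ∏ t, q (x t)) = affinity p q ^ n := by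
  simp only [affinity, ← Finset.prod_mul_distrib]
  rw [Fintype.sum_pow]
  exact Finset.sum_congr rfl fun x _ => Real.sqrt_prod _ fun t _ => mul_nonneg (hp _) (hq _)

lemma one_eighth_le_sum_min_prod {p q : Z → ℝ} (hp : ∀ z, 0 ≤ p z) (hq : ∀ z, 0 ≤ q z)
    (hpsum : ∑ z, p z = 1) (hqsum : ∑ z, q z = 1) {n : ℕ} (hn : 1 ≤ n)
    (haff : 1 - 1 / (2 * n) ≤ affinity p q) :
    1 / 8 ≤ ∑ x : Fin n → Z, min (∏ t, p (x t)) (∏ t, q (x t)) := by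
  have hn' : (1 : ℝ) ≤ n := by exact_mod_cast hn
  classical
  have prod_sum : ∀ {f : Z → ℝ}, ∑ z, f z = 1 → ∑ x : Fin n → Z, ∏ t, f (x t) = 1 := by
    intro f hf
    rw [← Fintype.sum_pow, hf, one_pow]
  have half_le : 1 / 2 ≤ affinity p q ^ n := by
    have hle : -2 ≤ affinity p q - 1 := by
      have : 1 / (2 * (n : ℝ)) ≤ 1 := (div_le_one (by positivity)).2 (by linarith)
      linarith
    calc (1 : ℝ) / 2 = 1 + n * ((1 - 1 / (2 * n)) - 1) := by field_simp; ring
      _ ≤ 1 + n * (affinity p q - 1) := by gcongr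
      _ ≤ (1 + (affinity p q - 1)) ^ n := one_add_mul_le_pow hle n
      _ = affinity p q ^ n := by rw [add_sub_cancel]
  have sq_le := sq_affinity_le (p := fun x : Fin n → Z => ∏ t, p (x t))
    (q := fun x => ∏ t, q (x t)) (fun x => Finset.prod_nonneg fun t _ => hp _)
    (fun x => Finset.prod_nonneg fun t _ => hq _) (prod_sum hpsum) (prod_sum hqsum)
  rw [affinity_prod hp hq] at sq_le
  nlinarith

lemma sub_sq_div_le_sqrt_mul {p q δ : ℝ} (hδ : 0 < δ) (hp : δ ≤ p) (hq : δ ≤ q) :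
    (p + q) / 2 - (p - q) ^ 2 / (8 * δ) ≤ √(p * q) := by
  -- `(p + q) / 2 - √(p * q) = (√p - √q) ^ 2 / 2` and `(√p - √q) * (√p + √q) = p - q`
  have hp0 : 0 ≤ p := hδ.le.trans hp
  have hq0 : 0 ≤ q := hδ.le.trans hq
  have sum_sq : 4 * δ ≤ (√p + √q) ^ 2 := by
    have := mul_le_mul (Real.sqrt_le_sqrt hp) (Real.sqrt_le_sqrt hq) (by positivity) (by positivity)
    nlinarith [Real.sq_sqrt hp0, Real.sq_sqrt hq0, Real.mul_self_sqrt hδ.le]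
  have sub_sq : (√p - √q) ^ 2 * (4 * δ) ≤ (p - q) ^ 2 := by
    calc (√p - √q) ^ 2 * (4 * δ) ≤ (√p - √q) ^ 2 * (√p + √q) ^ 2 := by gcongr
      _ = (√p ^ 2 - √q ^ 2) ^ 2 := by ring
      _ = (p - q) ^ 2 := by rw [Real.sq_sqrt hp0, Real.sq_sqrt hq0]
  have half_le : (√p - √q) ^ 2 / 2 ≤ (p - q) ^ 2 / (8 * δ) := by
    rw [div_le_div_iff₀ two_pos (by positivity)]
    linarith
  rw [Real.sqrt_mul hp0]
  nlinarith [Real.sq_sqrt hp0, Real.sq_sqrt hq0]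

lemma one_sub_sum_sq_div_le_affinity {p q : Z → ℝ} {δ : ℝ} (hδ : 0 < δ) (hp : ∀ z, δ ≤ p z)
    (hq : ∀ z, δ ≤ q z) (hpsum : ∑ z, p z = 1) (hqsum : ∑ z, q z = 1) :
    1 - (∑ z, (p z - q z) ^ 2) / (8 * δ) ≤ affinity p q := by
  calc 1 - (∑ z, (p z - q z) ^ 2) / (8 * δ)
      = ∑ z, ((p z + q z) / 2 - (p z - q z) ^ 2 / (8 * δ)) := by
        rw [Finset.sum_sub_distrib, ← Finset.sum_div, ← Finset.sum_div, Finset.sum_add_distrib,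
          hpsum, hqsum, add_self_div_two]
    _ ≤ affinity p q := Finset.sum_le_sum fun z _ => sub_sq_div_le_sqrt_mul hδ (hp z) (hq z)

end Affinity

/-! ### Discrete laws and two-point responses -/

section DiscreteLaw

variable {Z Ω : Type*} [Fintype Z] [MeasurableSpace Ω] [MeasurableSingletonClass Ω]
  {q : Z → ℝ} {g : Z → Ω}

/-- The law on `Ω` that puts mass `q z` at the point `g z`. Its product laws are carried by
finitely many sample points, so that no measurability is required of estimators. -/
def discreteLaw (q : Z → ℝ) (g : Z → Ω) : Measure Ω :=
  ∑ z, ENNReal.ofReal (q z) • Measure.dirac (g z)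

lemma discreteLaw_apply (hq : ∀ z, 0 ≤ q z) (s : Set Ω) [DecidablePred (g · ∈ s)] :
    discreteLaw q g s = ENNReal.ofReal (∑ z with g z ∈ s, q z) := by
  simp only [discreteLaw, Measure.finsetSum_apply, Measure.smul_apply, Measure.dirac_apply,
    smul_eq_mul]
  rw [Finset.sum_filter, ENNReal.ofReal_sum_of_nonneg fun z _ => by split_ifs <;> simp [hq]]
  refine Finset.sum_congr rfl fun z _ => ?_
  by_cases hz : g z ∈ s <;> simp [hz]

lemma isProbabilityMeasure_discreteLaw (hq : ∀ z, 0 ≤ q z) (hsum : ∑ z, q z = 1) :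
    IsProbabilityMeasure (discreteLaw q g) := by
  classical
  exact ⟨by simp [discreteLaw_apply hq, hsum]⟩

lemma ae_discreteLaw (hq : ∀ z, 0 ≤ q z) {p : Ω → Prop} (hp : ∀ z, p (g z)) :
    ∀ᵐ ω ∂discreteLaw q g, p ω := by
  classical
  rw [ae_iff, discreteLaw_apply hq]
  simp [hp]

lemma integral_discreteLaw (hq : ∀ z, 0 ≤ q z) (f : Ω → ℝ) :
    ∫ ω, f ω ∂discreteLaw q g = ∑ z, q z * f (g z) := by
  rw [discreteLaw, integral_finsetSum_measure fun z _ =>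
    (integrable_dirac (by simp)).smul_measure ENNReal.ofReal_ne_top]
  simp [integral_smul_measure, ENNReal.toReal_ofReal (hq _)]

lemma ofReal_sum_prod_le_pi_discreteLaw {n : ℕ} (hq : ∀ z, 0 ≤ q z) (hsum : ∑ z, q z = 1)
    (hg : Function.Injective g) {T : Finset (Fin n → Z)} {s : Set (Fin n → Ω)}
    (hT : ∀ x ∈ T, (fun t => g (x t)) ∈ s) :
    ENNReal.ofReal (∑ x ∈ T, ∏ t, q (x t)) ≤ Measure.pi (fun _ : Fin n => discreteLaw q g) s := by
  classical
  have := isProbabilityMeasure_discreteLaw (g := g) hq hsum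
  have hinj : Function.Injective fun (x : Fin n → Z) t => g (x t) := hg.comp_left
  have hsub : (↑(T.image fun x t => g (x t)) : Set (Fin n → Ω)) ⊆ s := by
    rw [Finset.coe_image]
    rintro _ ⟨x, hx, rfl⟩
    exact hT x hx
  have mass : ∀ z, discreteLaw q g {g z} = ENNReal.ofReal (q z) := by
    intro z
    simp only [discreteLaw_apply hq, Set.mem_singleton_iff, hg.eq_iff, Finset.sum_filter,
      Finset.sum_ite_eq', Finset.mem_univ, if_true]
  refine le_trans (le_of_eq ?_) (measure_mono hsub)
  rw [← sum_measure_singleton, Finset.sum_image hinj.injOn,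
    ENNReal.ofReal_sum_of_nonneg fun x _ => Finset.prod_nonneg fun t _ => hq _]
  refine Finset.sum_congr rfl fun x _ => ?_
  rw [Measure.pi_singleton, ENNReal.ofReal_prod_of_nonneg fun t _ => hq _]
  simp only [mass]

end DiscreteLaw

section TwoPointLaw

lemma sum_ite_fst_eq_and {α β γ : Type*} [Fintype α] [Fintype β] [Fintype γ] [DecidableEq α]
    [DecidableEq β] (f : α × β × γ → ℝ) (u : α) (v : β) :
    ∑ z : α × β × γ, (if z.1 = u ∧ z.2.1 = v then f z else 0) = ∑ b, f (u, v, b) := by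
  rw [Fintype.sum_prod_type, Fintype.sum_eq_single u fun u' hu => by simp [hu],
    Fintype.sum_prod_type, Fintype.sum_eq_single v fun v' hv => by simp [hv]]
  simp

variable {m : ℕ} {a : ℝ} {S S' : Matrix (Fin m) (Fin m) ℝ}

/-- The density, on vertex pairs and response signs, of a uniform design with responses `±a` whose
conditional mean is `S`. -/
def twoPointDensity (a : ℝ) (S : Matrix (Fin m) (Fin m) ℝ) (z : Fin m × Fin m × Bool) : ℝ :=
  (1 + boolSign z.2.2 * (S z.1 z.2.1 / a)) / (2 * (m : ℝ) ^ 2)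

/-- The observation with response `±a` encoded by a vertex pair and a sign. -/
def twoPointObs (a : ℝ) (z : Fin m × Fin m × Bool) : Obs m := (z.1, z.2.1, a * boolSign z.2.2)

/-- The law of an observation with uniform design and responses `±a` of conditional mean `S`. -/
def twoPointLaw (a : ℝ) (S : Matrix (Fin m) (Fin m) ℝ) : Measure (Obs m) :=
  discreteLaw (twoPointDensity a S) (twoPointObs a)

lemma twoPointObs_injective (ha : 0 < a) : Function.Injective (twoPointObs (m := m) a) := by
  rintro ⟨u, v, b⟩ ⟨u', v', b'⟩ h
  simp only [twoPointObs, Prod.mk.injEq] at h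
  obtain ⟨rfl, rfl, h⟩ := h
  have hsign : boolSign b = boolSign b' := mul_left_cancel₀ ha.ne' h
  cases b <;> cases b' <;> first | rfl | norm_num [boolSign] at hsign

lemma le_twoPointDensity {ε : ℝ} (ha : 0 < a) (hS : ∀ u v, |S u v| ≤ (1 - ε) * a)
    (z : Fin m × Fin m × Bool) : ε / (2 * (m : ℝ) ^ 2) ≤ twoPointDensity a S z := by
  have hdiv : |S z.1 z.2.1 / a| ≤ 1 - ε := by
    rw [abs_div, abs_of_pos ha, div_le_iff₀ ha]
    exact hS _ _
  have hsign : -(1 - ε) ≤ boolSign z.2.2 * (S z.1 z.2.1 / a) :=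
    (neg_le_neg hdiv).trans (by
      rw [← one_mul |_|, ← abs_boolSign z.2.2, ← abs_mul]
      exact neg_abs_le _)
  rw [twoPointDensity]
  gcongr
  linarith

lemma twoPointDensity_nonneg (ha : 0 < a) (hS : ∀ u v, |S u v| ≤ a)
    (z : Fin m × Fin m × Bool) : 0 ≤ twoPointDensity a S z := by
  simpa using le_twoPointDensity (ε := 0) ha (by simpa using hS) z

variable [NeZero m]

lemma sum_twoPointDensity_bool (a : ℝ) (S : Matrix (Fin m) (Fin m) ℝ) (u v : Fin m) :
    ∑ b, twoPointDensity a S (u, v, b) = ((m : ℝ) ^ 2)⁻¹ := by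
  have hm : (m : ℝ) ≠ 0 := NeZero.ne _
  simp only [twoPointDensity, boolSign, Fintype.sum_bool, if_true, Bool.false_eq_true, if_false]
  field_simp
  ring

lemma sum_twoPointDensity (a : ℝ) (S : Matrix (Fin m) (Fin m) ℝ) :
    ∑ z, twoPointDensity a S z = 1 := by
  have hm : (m : ℝ) ≠ 0 := NeZero.ne _
  simp only [Fintype.sum_prod_type, sum_twoPointDensity_bool, Finset.sum_const, Finset.card_univ,
    Fintype.card_fin, nsmul_eq_mul]
  field_simp

lemma sum_sub_sq_twoPointDensity (ha : 0 < a) (S S' : Matrix (Fin m) (Fin m) ℝ) :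
    ∑ z, (twoPointDensity a S z - twoPointDensity a S' z) ^ 2 =
      hsNormSq (S - S') / (2 * a ^ 2 * (m : ℝ) ^ 4) := by
  have hm : (m : ℝ) ≠ 0 := NeZero.ne _
  simp only [Fintype.sum_prod_type, hsNormSq, Finset.sum_div]
  refine Finset.sum_congr rfl fun u _ => Finset.sum_congr rfl fun v _ => ?_
  simp only [twoPointDensity, boolSign, Fintype.sum_bool, if_true, Bool.false_eq_true, if_false,
    Matrix.sub_apply]
  field_simp
  ring

lemma one_eighth_le_sum_min_twoPointDensity {n : ℕ} (hn : 1 ≤ n) (ha : 0 < a)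
    (hS : ∀ u v, |S u v| ≤ a / 2) (hS' : ∀ u v, |S' u v| ≤ a / 2)
    (hdist : hsNormSq (S - S') ≤ 2 * a ^ 2 * (m : ℝ) ^ 2 / n) :
    1 / 8 ≤ ∑ x : Fin n → Fin m × Fin m × Bool,
      min (∏ t, twoPointDensity a S (x t)) (∏ t, twoPointDensity a S' (x t)) := by
  have hm : (0 : ℝ) < m := by exact_mod_cast NeZero.pos m
  have hn' : (0 : ℝ) < n := by exact_mod_cast hn
  have lower : ∀ {R : Matrix (Fin m) (Fin m) ℝ}, (∀ u v, |R u v| ≤ a / 2) →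
      ∀ z, 1 / (4 * (m : ℝ) ^ 2) ≤ twoPointDensity a R z := by
    intro R hR z
    refine le_trans (le_of_eq ?_)
      (le_twoPointDensity (ε := 1 / 2) ha (fun u v => (hR u v).trans_eq (by ring)) z)
    field_simp
    norm_num
  have aff := one_sub_sum_sq_div_le_affinity (by positivity) (lower hS) (lower hS')
    (sum_twoPointDensity a S) (sum_twoPointDensity a S')
  refine one_eighth_le_sum_min_prod (fun z => le_trans (by positivity) (lower hS z))
    (fun z => le_trans (by positivity) (lower hS' z)) (sum_twoPointDensity a S)
    (sum_twoPointDensity a S') hn (le_trans ?_ aff)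
  have hdist' : hsNormSq (S - S') * n ≤ 2 * a ^ 2 * (m : ℝ) ^ 2 := (le_div_iff₀ hn').1 hdist
  rw [sum_sub_sq_twoPointDensity ha, sub_le_sub_iff_left, div_div,
    div_le_div_iff₀ (by positivity) (by positivity)]
  field_simp
  linarith

lemma uniformDesign_twoPointLaw (ha : 0 < a) (hS : ∀ u v, |S u v| ≤ a) :
    UniformDesign m (twoPointLaw a S) := by
  intro u v
  have hm : (0 : ℝ) < m := by exact_mod_cast NeZero.pos m
  have mass : ∑ z with twoPointObs a z ∈ {z : Obs m | z.1 = u ∧ z.2.1 = v},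
      twoPointDensity a S z = ((m : ℝ) ^ 2)⁻¹ := by
    rw [← sum_twoPointDensity_bool a S u v, ← sum_ite_fst_eq_and, Finset.sum_filter]
    rfl
  rw [twoPointLaw, discreteLaw_apply (twoPointDensity_nonneg ha hS), mass,
    ENNReal.ofReal_inv_of_pos (by positivity), ENNReal.ofReal_pow hm.le, ENNReal.ofReal_natCast]

lemma regKernel_twoPointLaw (ha : 0 < a) (hS : ∀ u v, |S u v| ≤ a) :
    regKernel m (twoPointLaw a S) = S := by
  have hm : (m : ℝ) ≠ 0 := NeZero.ne _
  ext u v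
  simp only [regKernel, Matrix.of_apply, twoPointLaw,
    integral_discreteLaw (twoPointDensity_nonneg ha hS), twoPointObs, mul_ite, mul_zero,
    sum_ite_fst_eq_and, twoPointDensity, boolSign, Fintype.sum_bool, Bool.false_eq_true, if_true,
    if_false]
  field_simp
  ring

lemma memP_twoPointLaw {r : ℕ} {ρ : ℝ} {lam : ℕ → ℝ} {φ : ℕ → Fin m → ℝ} (ha : 0 < a)
    (hS : ∀ u v, |S u v| ≤ a) (hsymm : S.IsSymm) (hrank : S.rank ≤ r)
    (hsob : sobolevHSSq lam φ S ≤ ρ ^ 2 * (m : ℝ) ^ 2) : MemP m r ρ a lam φ (twoPointLaw a S) := by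
  rw [MemP, regKernel_twoPointLaw ha hS]
  refine ⟨isProbabilityMeasure_discreteLaw (twoPointDensity_nonneg ha hS) (sum_twoPointDensity a S),
    uniformDesign_twoPointLaw ha hS, ae_discreteLaw (twoPointDensity_nonneg ha hS) fun z => ?_,
    hsymm, hrank, hsob⟩
  rw [twoPointObs, abs_mul, abs_boolSign, mul_one, abs_of_pos ha]

end TwoPointLaw

/-! ### Kernels in the eigenbasis -/

section EigenKernel

open scoped Matrix

variable {m : ℕ} {φ : ℕ → Fin m → ℝ} {A : Matrix (Fin m) (Fin m) ℝ}

lemma hsNormSq_eq_trace (S : Matrix (Fin m) (Fin m) ℝ) : hsNormSq S = (S * Sᵀ).trace := by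
  simp [hsNormSq, Matrix.trace, Matrix.mul_apply, sq]

lemma hsNormSq_smul (s : ℝ) (S : Matrix (Fin m) (Fin m) ℝ) :
    hsNormSq (s • S) = s ^ 2 * hsNormSq S := by
  simp [hsNormSq, mul_pow, Finset.mul_sum]

lemma hsNormSq_transpose (S : Matrix (Fin m) (Fin m) ℝ) : hsNormSq Sᵀ = hsNormSq S :=
  Finset.sum_comm

lemma hsNormSq_add_le (S T : Matrix (Fin m) (Fin m) ℝ) :
    hsNormSq (S + T) ≤ 2 * hsNormSq S + 2 * hsNormSq T := by
  simp only [hsNormSq, Finset.mul_sum, ← Finset.sum_add_distrib, Matrix.add_apply]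
  refine Finset.sum_le_sum fun u _ => Finset.sum_le_sum fun v _ => ?_
  linarith [two_mul_le_add_sq (S u v) (T u v), add_sq (S u v) (T u v)]

lemma hsNormSq_add_transpose_le (S : Matrix (Fin m) (Fin m) ℝ) :
    hsNormSq (S + Sᵀ) ≤ 4 * hsNormSq S := by
  linarith [hsNormSq_add_le S Sᵀ, hsNormSq_transpose S]

lemma hsNormSq_vecMulVec (v w : Fin m → ℝ) :
    hsNormSq (Matrix.vecMulVec v w) = (∑ j, v j ^ 2) * ∑ k, w k ^ 2 := by
  simp only [hsNormSq, Matrix.vecMulVec_apply, mul_pow, Finset.sum_mul_sum]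

lemma hsNormSq_vecMulVec_self_sub_le (v w : Fin m → ℝ) :
    hsNormSq (Matrix.vecMulVec v v - Matrix.vecMulVec w w) ≤
      2 * (∑ j, v j ^ 2 + ∑ j, w j ^ 2) * ∑ j, (v j - w j) ^ 2 := by
  have hsplit : Matrix.vecMulVec v v - Matrix.vecMulVec w w =
      Matrix.vecMulVec v (v - w) + Matrix.vecMulVec (v - w) w := by
    rw [Matrix.vecMulVec_sub, Matrix.sub_vecMulVec, sub_add_sub_cancel]
  refine (hsplit ▸ hsNormSq_add_le _ _).trans_eq ?_
  simp only [hsNormSq_vecMulVec, Pi.sub_apply]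
  ring

lemma sum_sq_le_hsNormSq {ι : Type*} {I : Finset ι} {loc : ι → Fin m × Fin m}
    (hloc : Set.InjOn loc I) (S : Matrix (Fin m) (Fin m) ℝ) :
    ∑ i ∈ I, S (loc i).1 (loc i).2 ^ 2 ≤ hsNormSq S := by
  classical
  rw [hsNormSq, ← Fintype.sum_prod_type', ← Finset.sum_image (f := fun p => S p.1 p.2 ^ 2) hloc]
  exact Finset.sum_le_sum_of_subset_of_nonneg (Finset.subset_univ _) fun _ _ _ => sq_nonneg _

/-- The matrix whose rows are the eigenfunctions; row `j : Fin m` is `φ (j + 1)`, since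
eigenfunctions are numbered from `1`. -/
def eigenMatrix (φ : ℕ → Fin m → ℝ) : Matrix (Fin m) (Fin m) ℝ := Matrix.of fun j v => φ (j + 1) v

/-- The kernel `∑ⱼₖ Aⱼₖ φⱼ ⊗ φₖ` with coefficient matrix `A` in the eigenbasis. -/
def kernelOfCoeffs (φ : ℕ → Fin m → ℝ) (A : Matrix (Fin m) (Fin m) ℝ) : Matrix (Fin m) (Fin m) ℝ :=
  (eigenMatrix φ)ᵀ * A * eigenMatrix φ

/-- The coefficient matrix of a kernel in the eigenbasis. -/
def coeffsOfKernel (φ : ℕ → Fin m → ℝ) (S : Matrix (Fin m) (Fin m) ℝ) : Matrix (Fin m) (Fin m) ℝ :=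
  eigenMatrix φ * S * (eigenMatrix φ)ᵀ

lemma kernelOfCoeffs_apply (φ : ℕ → Fin m → ℝ) (A : Matrix (Fin m) (Fin m) ℝ) (u v : Fin m) :
    kernelOfCoeffs φ A u v =
      ∑ p : Fin m × Fin m, A p.1 p.2 * (eigenMatrix φ p.1 u * eigenMatrix φ p.2 v) := by
  simp only [kernelOfCoeffs, Matrix.mul_apply, Matrix.transpose_apply, Finset.sum_mul]
  rw [Finset.sum_comm, ← Fintype.sum_prod_type']
  exact Finset.sum_congr rfl fun p _ => by ring

lemma kernelOfCoeffs_add (φ : ℕ → Fin m → ℝ) (A B : Matrix (Fin m) (Fin m) ℝ) :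
    kernelOfCoeffs φ (A + B) = kernelOfCoeffs φ A + kernelOfCoeffs φ B := by
  simp only [kernelOfCoeffs, Matrix.mul_add, Matrix.add_mul]

lemma kernelOfCoeffs_sub (φ : ℕ → Fin m → ℝ) (A B : Matrix (Fin m) (Fin m) ℝ) :
    kernelOfCoeffs φ (A - B) = kernelOfCoeffs φ A - kernelOfCoeffs φ B := by
  simp only [kernelOfCoeffs, Matrix.mul_sub, Matrix.sub_mul]

lemma kernelOfCoeffs_transpose (φ : ℕ → Fin m → ℝ) (A : Matrix (Fin m) (Fin m) ℝ) :
    kernelOfCoeffs φ Aᵀ = (kernelOfCoeffs φ A)ᵀ := by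
  simp only [kernelOfCoeffs, Matrix.transpose_mul, Matrix.transpose_transpose, Matrix.mul_assoc]

lemma kernelOfCoeffs_smul_vecMulVec_self_apply (φ : ℕ → Fin m → ℝ) (s : ℝ) (w : Fin m → ℝ)
    (u v : Fin m) :
    kernelOfCoeffs φ (s • Matrix.vecMulVec w w) u v =
      s * ((w ᵥ* eigenMatrix φ) u * (w ᵥ* eigenMatrix φ) v) := by
  rw [kernelOfCoeffs, Matrix.mul_smul, Matrix.smul_mul, Matrix.mul_vecMulVec, Matrix.vecMulVec_mul,
    Matrix.mulVec_transpose, Matrix.smul_apply, Matrix.vecMulVec_apply, smul_eq_mul]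

lemma isSymm_kernelOfCoeffs (φ : ℕ → Fin m → ℝ) (hA : A.IsSymm) : (kernelOfCoeffs φ A).IsSymm := by
  rw [Matrix.IsSymm, ← kernelOfCoeffs_transpose, hA]

lemma rank_kernelOfCoeffs_le (φ : ℕ → Fin m → ℝ) (A : Matrix (Fin m) (Fin m) ℝ) :
    (kernelOfCoeffs φ A).rank ≤ A.rank :=
  (Matrix.rank_mul_le_left _ _).trans (Matrix.rank_mul_le_right _ _)

lemma eigenMatrix_mul_transpose (hφ : OrthonormalFamily m φ) :
    eigenMatrix φ * (eigenMatrix φ)ᵀ = 1 := by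
  ext i j
  have hij := hφ (i + 1) (by simp) (j + 1) (by simp)
  simpa [Matrix.mul_apply, eigenMatrix, Matrix.one_apply, Fin.ext_iff] using hij

lemma transpose_mul_eigenMatrix (hφ : OrthonormalFamily m φ) :
    (eigenMatrix φ)ᵀ * eigenMatrix φ = 1 :=
  mul_eq_one_comm.1 (eigenMatrix_mul_transpose hφ)

lemma kernelOfCoeffs_coeffsOfKernel (hφ : OrthonormalFamily m φ) (S : Matrix (Fin m) (Fin m) ℝ) :
    kernelOfCoeffs φ (coeffsOfKernel φ S) = S := by
  have hF := transpose_mul_eigenMatrix hφ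
  rw [kernelOfCoeffs, coeffsOfKernel, Matrix.mul_assoc, Matrix.mul_assoc, Matrix.mul_assoc, hF,
    Matrix.mul_one, ← Matrix.mul_assoc, hF, Matrix.one_mul]

lemma hsNormSq_kernelOfCoeffs (hφ : OrthonormalFamily m φ) (A : Matrix (Fin m) (Fin m) ℝ) :
    hsNormSq (kernelOfCoeffs φ A) = hsNormSq A := by
  have hF := eigenMatrix_mul_transpose hφ
  rw [hsNormSq_eq_trace, hsNormSq_eq_trace, ← kernelOfCoeffs_transpose, kernelOfCoeffs,
    kernelOfCoeffs, Matrix.trace_mul_comm]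
  simp only [Matrix.mul_assoc]
  rw [← Matrix.mul_assoc (eigenMatrix φ), hF, Matrix.one_mul, Matrix.trace_mul_comm]
  simp only [Matrix.mul_assoc]
  rw [hF, Matrix.mul_one, Matrix.trace_mul_comm]

lemma sum_sq_kernelOfCoeffs_mulVec (hφ : OrthonormalFamily m φ) (A : Matrix (Fin m) (Fin m) ℝ)
    (k : Fin m) :
    ∑ u, ((kernelOfCoeffs φ A).mulVec (φ (k + 1)) u) ^ 2 = ∑ j, A j k ^ 2 := by
  set F := eigenMatrix φ
  have mulVec_eq : ∀ u, (kernelOfCoeffs φ A).mulVec (φ (k + 1)) u = (Fᵀ * A) u k := by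
    intro u
    calc (kernelOfCoeffs φ A).mulVec (φ (k + 1)) u = (kernelOfCoeffs φ A * Fᵀ) u k := rfl
      _ = (Fᵀ * A) u k := by
          rw [kernelOfCoeffs, Matrix.mul_assoc, eigenMatrix_mul_transpose hφ, Matrix.mul_one]
  have gram : (Fᵀ * A)ᵀ * (Fᵀ * A) = Aᵀ * A := by
    rw [Matrix.transpose_mul, Matrix.transpose_transpose, Matrix.mul_assoc,
      ← Matrix.mul_assoc F, eigenMatrix_mul_transpose hφ, Matrix.one_mul]
  have diag := congrFun (congrFun gram k) k
  simp only [mulVec_eq]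
  simpa only [Matrix.mul_apply, Matrix.transpose_apply, ← sq] using diag

lemma sobolevHSSq_kernelOfCoeffs (hφ : OrthonormalFamily m φ) (lam : ℕ → ℝ)
    (A : Matrix (Fin m) (Fin m) ℝ) :
    sobolevHSSq lam φ (kernelOfCoeffs φ A) = ∑ k : Fin m, lam (k + 1) * ∑ j, A j k ^ 2 := by
  have hIcc : Finset.Icc 1 m = Finset.Ico (0 + 1) (m + 1) := by
    ext k
    simp only [Finset.mem_Icc, Finset.mem_Ico]
    omega
  rw [sobolevHSSq, hIcc, ← Finset.sum_Ico_add', ← Finset.range_eq_Ico, Finset.sum_range]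
  simp only [sum_sq_kernelOfCoeffs_mulVec hφ]

lemma sobolevHSSq_kernelOfCoeffs_le (hφ : OrthonormalFamily m φ) {lam : ℕ → ℝ} {l : ℕ} {Λ : ℝ}
    (hlam : ∀ k, 1 ≤ k → k ≤ l → lam k ≤ Λ) (hA : ∀ j k : Fin m, l ≤ k → A j k = 0) :
    sobolevHSSq lam φ (kernelOfCoeffs φ A) ≤ Λ * hsNormSq A := by
  rw [sobolevHSSq_kernelOfCoeffs hφ, hsNormSq, Finset.sum_comm, Finset.mul_sum]
  refine Finset.sum_le_sum fun k _ => ?_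
  rcases le_or_gt l k with hk | hk
  · simp [hA _ k hk]
  · exact mul_le_mul_of_nonneg_right (hlam _ (by omega) (by omega))
      (Finset.sum_nonneg fun _ _ => sq_nonneg _)

end EigenKernel

/-! ### Reduction to sign packings -/

section Reduction

variable {ι : Type*} [DecidableEq ι] {m n r l : ℕ} {ρ a Λ κ δ δ' : ℝ} {lam : ℕ → ℝ}
  {φ : ℕ → Fin m → ℝ} {I : Finset ι} {loc : ι → Fin m × Fin m}
  {A : (ι → Bool) → Matrix (Fin m) (Fin m) ℝ} {Shat : (Fin n → Obs m) → Matrix (Fin m) (Fin m) ℝ}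

/-- The lower bound for one estimator: some law of the class `𝒫_{r,ρ,a}` makes the squared error of
`Shat` at least `δ` with probability at least `1 / 64`. -/
def ExistsHardLaw (r : ℕ) (ρ a : ℝ) (lam : ℕ → ℝ) (φ : ℕ → Fin m → ℝ) (δ : ℝ)
    (Shat : (Fin n → Obs m) → Matrix (Fin m) (Fin m) ℝ) : Prop :=
  ∃ P : Measure (Obs m), MemP m r ρ a lam φ P ∧
    ENNReal.ofReal (1 / 64) ≤ (Measure.pi fun _ : Fin n => P)
      {ω | δ ≤ l2PiSq (Shat ω - regKernel m P)}

lemma ExistsHardLaw.mono (h : ExistsHardLaw r ρ a lam φ δ Shat) (hδ : δ' ≤ δ) :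
    ExistsHardLaw r ρ a lam φ δ' Shat := by
  obtain ⟨P, hP, hprob⟩ := h
  exact ⟨P, hP, hprob.trans (measure_mono fun ω hω => hδ.trans hω)⟩

/-- A family of coefficient matrices indexed by the sign cube in which the sign `σ i`, `i ∈ I`, is
read off the entry `±κ` at position `loc i`, whose kernels satisfy the rank and smoothness
constraints of `𝒮_{r,ρ}` (with `Λ` the largest eigenvalue in play), and in which reversing one sign
moves the kernel too little to be detected from `n` observations. -/
structure IsSignPacking (n r l : ℕ) (ρ a Λ κ : ℝ) (I : Finset ι) (loc : ι → Fin m × Fin m)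
    (A : (ι → Bool) → Matrix (Fin m) (Fin m) ℝ) : Prop where
  injOn : Set.InjOn loc I
  entry : ∀ σ, ∀ i ∈ I, A σ (loc i).1 (loc i).2 = κ * boolSign (σ i)
  isSymm : ∀ σ, (A σ).IsSymm
  rank_le : ∀ σ, (A σ).rank ≤ r
  support : ∀ σ, ∀ j k : Fin m, l ≤ k → A σ j k = 0
  smooth : ∀ σ, Λ * hsNormSq (A σ) ≤ ρ ^ 2 * (m : ℝ) ^ 2
  flip : ∀ σ, ∀ i ∈ I, hsNormSq (A σ - A (flipAt i σ)) ≤ 2 * a ^ 2 * (m : ℝ) ^ 2 / n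

lemma sq_le_sub_mul_boolSign_sq (hκ : 0 ≤ κ) {x : ℝ} {b : Bool} (h : decide (0 ≤ x) ≠ b) :
    κ ^ 2 ≤ (x - κ * boolSign b) ^ 2 := by
  cases b
  · have hx : 0 ≤ x := by simpa using h
    norm_num [boolSign]
    gcongr
    linarith
  · have hx : x < 0 := by simpa using h
    rw [← neg_sq (x - _)]
    norm_num [boolSign]
    gcongr
    linarith

lemma IsSignPacking.sq_mul_card_le_hsNormSq_sub (hA : IsSignPacking n r l ρ a Λ κ I loc A)
    (hκ : 0 ≤ κ) (σ : ι → Bool) (B : Matrix (Fin m) (Fin m) ℝ) :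
    κ ^ 2 * #{i ∈ I | decide (0 ≤ B (loc i).1 (loc i).2) ≠ σ i} ≤ hsNormSq (B - A σ) := by
  rw [mul_comm, ← nsmul_eq_mul]
  refine le_trans (Finset.card_nsmul_le_sum _ _ _ fun i hi => ?_) (sum_sq_le_hsNormSq
    (hA.injOn.mono (Finset.coe_subset.2 (Finset.filter_subset _ _))) (B - A σ))
  obtain ⟨hiI, hne⟩ := Finset.mem_filter.1 hi
  rw [Matrix.sub_apply, hA.entry σ i hiI]
  exact sq_le_sub_mul_boolSign_sq hκ hne

variable [Fintype ι] [NeZero m]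

lemma IsSignPacking.exists_le_sum_card_ne (hA : IsSignPacking n r l ρ a Λ κ I loc A) (hn : 1 ≤ n)
    (ha : 0 < a) (hφ : OrthonormalFamily m φ) (hI : I.Nonempty)
    (hbdd : 4 * #{σ | ∃ u v, a / 2 < |kernelOfCoeffs φ (A σ) u v|} ≤ 2 ^ Fintype.card ι)
    (est : (Fin n → Fin m × Fin m × Bool) → ι → Bool) :
    ∃ σ, (∀ u v, |kernelOfCoeffs φ (A σ) u v| ≤ a / 2) ∧
      1 / 64 ≤ ∑ x with (1 / 64 : ℝ) * #I ≤ #{i ∈ I | est x i ≠ σ i},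
        ∏ t, twoPointDensity a (kernelOfCoeffs φ (A σ)) (x t) := by
  set G : Finset (ι → Bool) := {σ | ∀ u v, |kernelOfCoeffs φ (A σ) u v| ≤ a / 2} with hG
  have hbound : ∀ σ ∈ G, ∀ u v, |kernelOfCoeffs φ (A σ) u v| ≤ a / 2 := fun σ hσ =>
    (Finset.mem_filter.1 hσ).2
  have hcompl : 4 * #Gᶜ ≤ 2 ^ Fintype.card ι := by
    simpa only [hG, Finset.compl_filter, not_forall, not_le] using hbdd
  have hflip : ∀ σ ∈ G, ∀ i ∈ I, flipAt i σ ∈ G → _ := fun σ hσ i hi hσ' =>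
    one_eighth_le_sum_min_twoPointDensity hn ha (hbound σ hσ) (hbound _ hσ') <| by
      rw [← kernelOfCoeffs_sub, hsNormSq_kernelOfCoeffs hφ]
      exact hA.flip σ i hi
  obtain ⟨σ, hσ, hsum⟩ := assouad hcompl hI (by norm_num)
    (f := fun σ (x : Fin n → _) => ∏ t, twoPointDensity a (kernelOfCoeffs φ (A σ)) (x t))
    (fun σ hσ x => Finset.prod_nonneg fun t _ => twoPointDensity_nonneg ha
      (fun u v => (hbound σ hσ u v).trans (by linarith)) _)
    (fun σ _ => by rw [← Fintype.sum_pow, sum_twoPointDensity, one_pow]) hflip est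
  have hα : (1 : ℝ) / 8 / 8 = 1 / 64 := by norm_num
  simp only [hα] at hsum
  exact ⟨σ, hbound σ hσ, hsum⟩

theorem IsSignPacking.existsHardLaw (hA : IsSignPacking n r l ρ a Λ κ I loc A) (hn : 1 ≤ n)
    (ha : 0 < a) (hκ : 0 ≤ κ) (hφ : OrthonormalFamily m φ)
    (hlam : ∀ k, 1 ≤ k → k ≤ l → lam k ≤ Λ) (hI : I.Nonempty)
    (hbdd : 4 * #{σ | ∃ u v, a / 2 < |kernelOfCoeffs φ (A σ) u v|} ≤ 2 ^ Fintype.card ι)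
    (Shat : (Fin n → Obs m) → Matrix (Fin m) (Fin m) ℝ) :
    ExistsHardLaw r ρ a lam φ (κ ^ 2 * #I / 64 / (m : ℝ) ^ 2) Shat := by
  -- the signs are estimated by the signs of the coefficients of `Shat`
  let est (x : Fin n → Fin m × Fin m × Bool) (i : ι) : Bool :=
    decide (0 ≤ coeffsOfKernel φ (Shat fun t => twoPointObs a (x t)) (loc i).1 (loc i).2)
  obtain ⟨σ, hhalf, hsum⟩ := hA.exists_le_sum_card_ne hn ha hφ hI hbdd est
  have hS : ∀ u v, |kernelOfCoeffs φ (A σ) u v| ≤ a := fun u v => (hhalf u v).trans (by linarith)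
  refine ⟨twoPointLaw a (kernelOfCoeffs φ (A σ)),
    memP_twoPointLaw ha hS (isSymm_kernelOfCoeffs φ (hA.isSymm σ))
      ((rank_kernelOfCoeffs_le φ _).trans (hA.rank_le σ))
      ((sobolevHSSq_kernelOfCoeffs_le hφ hlam (hA.support σ)).trans (hA.smooth σ)),
    (ENNReal.ofReal_le_ofReal hsum).trans (ofReal_sum_prod_le_pi_discreteLaw
      (twoPointDensity_nonneg ha hS) (sum_twoPointDensity a _) (twoPointObs_injective ha)
      fun x hx => ?_)⟩
  have hcard : (1 / 64 : ℝ) * #I ≤ #{i ∈ I | est x i ≠ σ i} := (Finset.mem_filter.1 hx).2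
  set H := Shat fun t => twoPointObs a (x t)
  rw [Set.mem_ofPred_eq, regKernel_twoPointLaw ha hS, l2PiSq]
  gcongr
  calc κ ^ 2 * #I / 64 = κ ^ 2 * (1 / 64 * #I) := by ring
    _ ≤ κ ^ 2 * #{i ∈ I | est x i ≠ σ i} := by gcongr
    _ ≤ hsNormSq (coeffsOfKernel φ H - A σ) := hA.sq_mul_card_le_hsNormSq_sub hκ σ _
    _ = hsNormSq (H - kernelOfCoeffs φ (A σ)) := by
        rw [← hsNormSq_kernelOfCoeffs hφ, kernelOfCoeffs_sub, kernelOfCoeffs_coeffsOfKernel hφ]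

end Reduction

/-! ### Sign packings of rank at least two -/

section Block

open scoped Matrix

variable {m n r R l s : ℕ} {ρ a Λ B D κ t : ℝ} {lam : ℕ → ℝ} {φ : ℕ → Fin m → ℝ}
  {I : Finset (Fin m × Fin m)}

lemma rank_add_le {ι ι' K : Type*} [Finite ι] [Fintype ι'] [Field K] (M N : Matrix ι ι' K) :
    (M + N).rank ≤ M.rank + N.rank := by
  have hrange : LinearMap.range (M + N).mulVecLin ≤
      LinearMap.range M.mulVecLin ⊔ LinearMap.range N.mulVecLin := by
    rintro _ ⟨x, rfl⟩
    rw [Matrix.mulVecLin_add, LinearMap.add_apply]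
    exact Submodule.add_mem_sup ⟨x, rfl⟩ ⟨x, rfl⟩
  exact (Submodule.finrank_mono hrange).trans (Submodule.finrank_add_le_finrank_add_finrank _ _)

lemma rank_le_of_forall_le_eq_zero {M : Matrix (Fin m) (Fin m) ℝ}
    (hM : ∀ j k : Fin m, s ≤ j → M j k = 0) : M.rank ≤ s := by
  have hproj : M = Matrix.diagonal (fun j : Fin m => if (j : ℕ) < s then (1 : ℝ) else 0) * M := by
    ext j k
    rw [Matrix.diagonal_mul]
    split_ifs with hj
    · rw [one_mul]
    · rw [zero_mul, hM j k (not_lt.1 hj)]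
  rw [hproj]
  refine (Matrix.rank_mul_le_left _ _).trans ?_
  rw [Matrix.rank_diagonal, Fintype.card_subtype]
  simp [Fin.card_filter_val_lt]

/-- The coefficient matrix with entries `±κ`, signed by `σ`, at the positions in `I`, and zero
elsewhere. -/
def signBlock (κ : ℝ) (I : Finset (Fin m × Fin m)) (σ : Fin m × Fin m → Bool) :
    Matrix (Fin m) (Fin m) ℝ :=
  Matrix.of fun j k => if (j, k) ∈ I then κ * boolSign (σ (j, k)) else 0

lemma signBlock_apply_of_mem {σ : Fin m × Fin m → Bool} {p : Fin m × Fin m} (hp : p ∈ I) :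
    signBlock κ I σ p.1 p.2 = κ * boolSign (σ p) := if_pos hp

lemma signBlock_apply_of_notMem {σ : Fin m × Fin m → Bool} {p : Fin m × Fin m} (hp : p ∉ I) :
    signBlock κ I σ p.1 p.2 = 0 := if_neg hp

lemma hsNormSq_signBlock (κ : ℝ) (I : Finset (Fin m × Fin m)) (σ : Fin m × Fin m → Bool) :
    hsNormSq (signBlock κ I σ) = κ ^ 2 * #I := by
  rw [hsNormSq, ← Fintype.sum_prod_type',
    ← Finset.sum_subset (Finset.subset_univ I)
      fun p _ hp => by rw [signBlock_apply_of_notMem hp, zero_pow two_ne_zero],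
    Finset.sum_congr rfl fun p hp => by
      rw [signBlock_apply_of_mem hp, mul_pow, boolSign_sq, mul_one],
    Finset.sum_const, nsmul_eq_mul, mul_comm]

lemma hsNormSq_signBlock_sub_flipAt_le (κ : ℝ) (I : Finset (Fin m × Fin m))
    (σ : Fin m × Fin m → Bool) (p : Fin m × Fin m) :
    hsNormSq (signBlock κ I σ - signBlock κ I (flipAt p σ)) ≤ 4 * κ ^ 2 := by
  rw [hsNormSq, ← Fintype.sum_prod_type', Fintype.sum_eq_single p]
  · by_cases hp : p ∈ I
    · rw [Matrix.sub_apply, signBlock_apply_of_mem hp, signBlock_apply_of_mem hp, flipAt_self,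
        boolSign_not]
      linear_combination 4 * κ ^ 2 * boolSign_sq (σ p)
    · rw [Matrix.sub_apply, signBlock_apply_of_notMem hp, signBlock_apply_of_notMem hp]
      nlinarith [sq_nonneg κ]
  · intro q hq
    rw [Matrix.sub_apply, signBlock, signBlock, Matrix.of_apply, Matrix.of_apply,
      flipAt_of_ne hq, sub_self, zero_pow two_ne_zero]

lemma kernelOfCoeffs_signBlock_apply (φ : ℕ → Fin m → ℝ) (κ : ℝ) (I : Finset (Fin m × Fin m))
    (σ : Fin m × Fin m → Bool) (u v : Fin m) :
    kernelOfCoeffs φ (signBlock κ I σ) u v = rademacherSum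
      (fun p => if p ∈ I then κ * (eigenMatrix φ p.1 u * eigenMatrix φ p.2 v) else 0) σ := by
  rw [kernelOfCoeffs_apply, rademacherSum]
  refine Finset.sum_congr rfl fun p _ => ?_
  by_cases hp : p ∈ I
  · rw [signBlock_apply_of_mem hp, if_pos hp]
    ring
  · rw [signBlock_apply_of_notMem hp, if_neg hp, zero_mul, mul_zero]

lemma four_mul_card_exists_lt_abs_kernelOfCoeffs_signBlock_le (hm : 2 ≤ m) (ht : 0 < t)
    (hB : ∀ j v, m * eigenMatrix φ j v ^ 2 ≤ B)
    (hκ : 12 * Real.log m * (κ ^ 2 * #I * B ^ 2) ≤ t ^ 2 * m ^ 2) :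
    4 * #{σ | ∃ y : Fin m × Fin m, t < |kernelOfCoeffs φ (signBlock κ I σ) y.1 y.2|} ≤
      2 ^ Fintype.card (Fin m × Fin m) := by
  have hlog : 0 < Real.log m := Real.log_pos (by exact_mod_cast hm)
  have hm0 : (0 : ℝ) < m := by positivity
  have hV : 0 < t ^ 2 / (12 * Real.log m) := by positivity
  have hoeffding := four_mul_card_exists_lt_abs_rademacherSum_le hm (Y := Fin m × Fin m)
    (x := fun y p => if p ∈ I then κ * (eigenMatrix φ p.1 y.1 * eigenMatrix φ p.2 y.2) else 0)
    (by simp [sq]) hV ht.le (fun y => ?_) (mul_div_cancel₀ _ (by positivity)).le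
  · simpa only [kernelOfCoeffs_signBlock_apply] using hoeffding
  have hentry : ∀ j u, eigenMatrix φ j u ^ 2 ≤ B / m := fun j u => (le_div_iff₀' hm0).2 (hB j u)
  have hprod : ∀ p ∈ I, (κ * (eigenMatrix φ p.1 y.1 * eigenMatrix φ p.2 y.2)) ^ 2 ≤
      κ ^ 2 * (B / m) ^ 2 := fun p _ => by
    rw [mul_pow, mul_pow, sq (B / m)]
    exact mul_le_mul_of_nonneg_left (mul_le_mul (hentry _ _) (hentry _ _) (sq_nonneg _)
      ((sq_nonneg _).trans (hentry p.1 y.1))) (sq_nonneg _)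
  calc _ = ∑ p ∈ I, (κ * (eigenMatrix φ p.1 y.1 * eigenMatrix φ p.2 y.2)) ^ 2 := by
        simp only [ite_pow, zero_pow two_ne_zero, Finset.sum_ite_mem, Finset.univ_inter]
    _ ≤ #I * (κ ^ 2 * (B / m) ^ 2) := by
        rw [← nsmul_eq_mul]
        exact Finset.sum_le_card_nsmul _ _ _ hprod
    _ ≤ t ^ 2 / (12 * Real.log m) := by
        rw [le_div_iff₀ (by positivity), div_pow, mul_div_assoc', mul_div_assoc',
          div_mul_eq_mul_div, div_le_iff₀ (by positivity)]
        linarith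

lemma four_mul_card_exists_lt_abs_kernelOfCoeffs_signBlock_add_transpose_le (hm : 2 ≤ m)
    (ha : 0 < a) (hB : ∀ j v, m * eigenMatrix φ j v ^ 2 ≤ B)
    (hκ : 192 * Real.log m * (κ ^ 2 * #I * B ^ 2) ≤ a ^ 2 * m ^ 2) :
    4 * #{σ | ∃ u v, a / 2 < |kernelOfCoeffs φ (signBlock κ I σ + (signBlock κ I σ)ᵀ) u v|} ≤
      2 ^ Fintype.card (Fin m × Fin m) := by
  refine le_trans ?_ (four_mul_card_exists_lt_abs_kernelOfCoeffs_signBlock_le (κ := κ) (I := I)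
    (t := a / 4) hm (by positivity) hB (by linarith))
  gcongr with σ
  rintro ⟨u, v, huv⟩
  rw [kernelOfCoeffs_add, kernelOfCoeffs_transpose, Matrix.add_apply, Matrix.transpose_apply] at huv
  by_contra! hsmall
  linarith [abs_add_le (kernelOfCoeffs φ (signBlock κ I σ) u v)
    (kernelOfCoeffs φ (signBlock κ I σ) v u), hsmall (u, v), hsmall (v, u)]

/-- The positions in the first `s` rows and the columns `s, …, l - 1`. They lie above the diagonal,
so a matrix carried by them does not overlap its transpose. -/
def blockIndex (m s l : ℕ) : Finset (Fin m × Fin m) :=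
  ({j : Fin m | (j : ℕ) < s} : Finset _) ×ˢ ({k : Fin m | s ≤ (k : ℕ) ∧ (k : ℕ) < l} : Finset _)

lemma mem_blockIndex {p : Fin m × Fin m} :
    p ∈ blockIndex m s l ↔ (p.1 : ℕ) < s ∧ s ≤ (p.2 : ℕ) ∧ (p.2 : ℕ) < l := by
  simp [blockIndex]

lemma card_blockIndex (hs : s ≤ l) (hl : l ≤ m) : #(blockIndex m s l) = s * (l - s) := by
  let below (t : ℕ) : Finset (Fin m) := {k | (k : ℕ) < t}
  have hcard : ∀ t ≤ m, #(below t) = t := fun t ht =>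
    (Fin.card_filter_val_lt (n := m) (m := t)).trans (min_eq_right ht)
  have hcols : ({k | s ≤ k ∧ k < l} : Finset (Fin m)) = below l \ below s := by
    ext k
    simp [below, and_comm]
  have hsub : below s ⊆ below l := Finset.monotone_filter_right _ fun k _ hk => hk.trans_le hs
  rw [blockIndex, Finset.card_product, hcols, Finset.card_sdiff_of_subset hsub, hcard l hl]
  exact congrArg (· * _) (hcard s (hs.trans hl))

lemma card_blockIndex_half_le (hRl : R ≤ l) (hlm : l ≤ m) :
    #(blockIndex m (R / 2) l) ≤ R * l := by
  rw [card_blockIndex (by omega) hlm]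
  exact Nat.mul_le_mul (by omega) (by omega)

lemma mul_le_six_mul_card_blockIndex_half (hR : 2 ≤ R) (hRl : R ≤ l) (hlm : l ≤ m) :
    R * l ≤ 6 * #(blockIndex m (R / 2) l) := by
  rw [card_blockIndex (by omega) hlm]
  calc R * l ≤ (3 * (R / 2)) * (2 * (l - R / 2)) := Nat.mul_le_mul (by omega) (by omega)
    _ = 6 * (R / 2 * (l - R / 2)) := by ring

/-- `D` is at most each of the three terms of `δₙ⁽²⁾` at level `l`, for rank `R` and `Λ`, `B` in the
roles of `λ_l`, `Q`, with denominators cleared: a packing at squared distance `D` is not detected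
from `n` observations, meets the Sobolev constraint, and consists of kernels bounded by `a`. -/
structure IsAdmissibleRate (m n R l : ℕ) (ρ a Λ B D : ℝ) : Prop where
  nonneg : 0 ≤ D
  undetected : D * n ≤ a ^ 2 * R * l
  smooth : Λ * D ≤ ρ ^ 2
  bounded : D * B ^ 2 * l * Real.log m ≤ a ^ 2 * R

lemma IsAdmissibleRate.mul_sq_mul_log_le (hD : IsAdmissibleRate m n R l ρ a Λ B D) (hRl : R ≤ l)
    (hl : 0 < l) : D * B ^ 2 * Real.log m ≤ a ^ 2 := by
  refine le_of_mul_le_mul_right ?_ (Nat.cast_pos.2 hl : (0 : ℝ) < l)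
  calc D * B ^ 2 * Real.log m * l = D * B ^ 2 * l * Real.log m := by ring
    _ ≤ a ^ 2 * R := hD.bounded
    _ ≤ a ^ 2 * l := by gcongr

lemma hsNormSq_signBlock_add_transpose_le (hκ : 512 * (κ ^ 2 * (R * l)) = D * m ^ 2)
    (hI : #I ≤ R * l) (σ : Fin m × Fin m → Bool) :
    hsNormSq (signBlock κ I σ + (signBlock κ I σ)ᵀ) ≤ D * m ^ 2 := by
  have hI' : (#I : ℝ) ≤ R * l := by exact_mod_cast hI
  have hκI : κ ^ 2 * #I ≤ κ ^ 2 * (R * l) := by gcongr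
  have hadd := hsNormSq_add_transpose_le (signBlock κ I σ)
  rw [hsNormSq_signBlock] at hadd
  have : 0 ≤ κ ^ 2 * (R * l : ℝ) := by positivity
  linarith

lemma hsNormSq_signBlock_add_transpose_sub_flipAt_le (κ : ℝ) (I : Finset (Fin m × Fin m))
    (σ : Fin m × Fin m → Bool) (p : Fin m × Fin m) :
    hsNormSq (signBlock κ I σ + (signBlock κ I σ)ᵀ -
      (signBlock κ I (flipAt p σ) + (signBlock κ I (flipAt p σ))ᵀ)) ≤ 16 * κ ^ 2 := by
  rw [add_sub_add_comm, ← Matrix.transpose_sub]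
  linarith [hsNormSq_add_transpose_le (signBlock κ I σ - signBlock κ I (flipAt p σ)),
    hsNormSq_signBlock_sub_flipAt_le κ I σ p]

lemma IsAdmissibleRate.signBlock_flip_le
    (hD : IsAdmissibleRate m n R l ρ a Λ B D) (hn : 1 ≤ n) (hR : 0 < R) (hl : 0 < l)
    (hκ : 512 * (κ ^ 2 * (R * l)) = D * m ^ 2) (σ : Fin m × Fin m → Bool) (p : Fin m × Fin m) :
    hsNormSq (signBlock κ I σ + (signBlock κ I σ)ᵀ -
      (signBlock κ I (flipAt p σ) + (signBlock κ I (flipAt p σ))ᵀ)) ≤ 2 * a ^ 2 * m ^ 2 / n := by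
  refine (hsNormSq_signBlock_add_transpose_sub_flipAt_le κ I σ p).trans ?_
  have hRl0 : (0 : ℝ) < R * l := by positivity
  rw [le_div_iff₀ (by exact_mod_cast hn)]
  refine le_of_mul_le_mul_right ?_ hRl0
  calc 16 * κ ^ 2 * n * (R * l) = D * n * m ^ 2 / 32 := by linear_combination n / 32 * hκ
    _ ≤ a ^ 2 * R * l * m ^ 2 / 32 := by
        have := mul_le_mul_of_nonneg_right hD.undetected (sq_nonneg (m : ℝ))
        linarith
    _ ≤ 2 * a ^ 2 * m ^ 2 * (R * l) := by
        nlinarith [mul_nonneg (mul_nonneg (sq_nonneg a) (sq_nonneg (m : ℝ))) hRl0.le]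

lemma rank_signBlock_blockIndex_add_transpose_le (κ : ℝ) (s l : ℕ) (σ : Fin m × Fin m → Bool) :
    (signBlock κ (blockIndex m s l) σ + (signBlock κ (blockIndex m s l) σ)ᵀ).rank ≤ 2 * s := by
  have hrank : (signBlock κ (blockIndex m s l) σ).rank ≤ s :=
    rank_le_of_forall_le_eq_zero fun j k hj =>
      signBlock_apply_of_notMem (p := (j, k)) fun hp => hj.not_gt (mem_blockIndex.1 hp).1
  have hadd := rank_add_le (signBlock κ (blockIndex m s l) σ) (signBlock κ (blockIndex m s l) σ)ᵀ
  rw [Matrix.rank_transpose] at hadd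
  omega

lemma isSignPacking_signBlock_add_transpose (hD : IsAdmissibleRate m n R l ρ a Λ B D) (hn : 1 ≤ n)
    (hΛ : 0 ≤ Λ) (hs : 1 ≤ s) (hsR : 2 * s ≤ R) (hRr : R ≤ r) (hRl : R ≤ l) (hlm : l ≤ m)
    (hκ : 512 * (κ ^ 2 * (R * l)) = D * m ^ 2) :
    IsSignPacking n r l ρ a Λ κ (blockIndex m s l) id fun σ =>
      signBlock κ (blockIndex m s l) σ + (signBlock κ (blockIndex m s l) σ)ᵀ where
  injOn := Function.injective_id.injOn
  entry σ p hp := by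
    have hswap : p.swap ∉ blockIndex m s l := by
      simp only [mem_blockIndex, Prod.fst_swap, Prod.snd_swap] at hp ⊢
      omega
    have hzero : signBlock κ (blockIndex m s l) σ p.2 p.1 = 0 := signBlock_apply_of_notMem hswap
    rw [id_eq, Matrix.add_apply, Matrix.transpose_apply, signBlock_apply_of_mem hp, hzero, add_zero]
  isSymm σ := by
    rw [Matrix.IsSymm, Matrix.transpose_add, Matrix.transpose_transpose, add_comm]
  rank_le σ := (rank_signBlock_blockIndex_add_transpose_le κ s l σ).trans (hsR.trans hRr)
  support σ j k hk := by
    have hjk : (j, k) ∉ blockIndex m s l := by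
      simp only [mem_blockIndex]
      omega
    have hkj : (k, j) ∉ blockIndex m s l := by
      simp only [mem_blockIndex]
      omega
    rw [Matrix.add_apply, Matrix.transpose_apply, signBlock_apply_of_notMem hjk,
      signBlock_apply_of_notMem hkj, add_zero]
  smooth σ := by
    have hcard : #(blockIndex m s l) ≤ R * l := by
      rw [card_blockIndex (by omega) hlm]
      gcongr <;> omega
    calc _ ≤ Λ * (D * m ^ 2) := by
          gcongr
          exact hsNormSq_signBlock_add_transpose_le hκ hcard σ
      _ = Λ * D * m ^ 2 := by ring
      _ ≤ ρ ^ 2 * m ^ 2 := by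
          gcongr
          exact hD.smooth
  flip σ p _ :=
    hD.signBlock_flip_le hn (by omega) (by omega) hκ σ p

lemma IsAdmissibleRate.existsHardLaw_of_two_le [NeZero m]
    (hD : IsAdmissibleRate m n R l ρ a Λ B D) (hn : 1 ≤ n) (ha : 0 < a)
    (hφ : OrthonormalFamily m φ) (hΛ : 0 ≤ Λ) (hlam : ∀ k, 1 ≤ k → k ≤ l → lam k ≤ Λ)
    (hB : ∀ j v, m * eigenMatrix φ j v ^ 2 ≤ B) (hR : 2 ≤ R) (hRr : R ≤ r) (hRl : R ≤ l)
    (hlm : l ≤ m) (Shat : (Fin n → Obs m) → Matrix (Fin m) (Fin m) ℝ) :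
    ExistsHardLaw r ρ a lam φ (D / 196608) Shat := by
  set κ := √(D * m ^ 2 / (512 * (R * l)))
  have hR0 : (0 : ℝ) < R := Nat.cast_pos.2 (by omega)
  have hl0 : (0 : ℝ) < l := Nat.cast_pos.2 (by omega)
  have hm0 : (0 : ℝ) < m := Nat.cast_pos.2 (by omega)
  have hκ : 512 * (κ ^ 2 * (R * l)) = D * m ^ 2 := by
    rw [Real.sq_sqrt (div_nonneg (mul_nonneg hD.nonneg (sq_nonneg _)) (by positivity))]
    field_simp
  set I := blockIndex m (R / 2) l
  have hI_le : (#I : ℝ) ≤ R * l := by exact_mod_cast card_blockIndex_half_le hRl hlm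
  have le_hI : (R * l : ℝ) ≤ 6 * #I := by
    exact_mod_cast mul_le_six_mul_card_blockIndex_half hR hRl hlm
  have hI : I.Nonempty := Finset.card_pos.1 (by exact_mod_cast (by nlinarith : (0 : ℝ) < #I))
  have hpacking := isSignPacking_signBlock_add_transpose (s := R / 2) hD hn hΛ (by omega)
    (by omega) hRr hRl hlm hκ
  refine (hpacking.existsHardLaw hn ha (Real.sqrt_nonneg _) hφ hlam hI
    (four_mul_card_exists_lt_abs_kernelOfCoeffs_signBlock_add_transpose_le (by omega) ha hB ?_)
    Shat).mono ?_
  · calc 192 * Real.log m * (κ ^ 2 * #I * B ^ 2)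
        ≤ 192 * Real.log m * (κ ^ 2 * (R * l) * B ^ 2) := by gcongr
      _ = D * B ^ 2 * Real.log m * (3 / 8 * m ^ 2) := by
          linear_combination 192 / 512 * Real.log m * B ^ 2 * hκ
      _ ≤ a ^ 2 * (1 * m ^ 2) := by
          gcongr
          · exact hD.mul_sq_mul_log_le hRl (by omega)
          · norm_num
      _ = a ^ 2 * m ^ 2 := by ring
  · rw [le_div_iff₀ (by positivity)]
    have := mul_le_mul_of_nonneg_left le_hI (sq_nonneg κ)
    linarith

end Block

/-! ### Sign packings of rank one -/

section Spike

open scoped Matrix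

variable {m n r l : ℕ} {ρ a Λ B D τ : ℝ} {lam : ℕ → ℝ} {φ : ℕ → Fin m → ℝ}

lemma sq_add_le_of_abs_le_sqrt (hm : 2 ≤ m) {x y : ℝ} (hx : m * x ^ 2 ≤ B)
    (hy : |y| ≤ √(12 * Real.log m * (B / m))) : m * (x + y) ^ 2 ≤ 28 * Real.log m * B := by
  have hm0 : (0 : ℝ) < m := Nat.cast_pos.2 (by omega)
  have hB0 : 0 ≤ B := (by positivity : (0 : ℝ) ≤ m * x ^ 2).trans hx
  have hlog : 1 / 2 ≤ Real.log m := by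
    have := Real.log_le_log two_pos (by exact_mod_cast hm : (2 : ℝ) ≤ m)
    linarith [Real.log_two_gt_d9]
  have hy2 : m * y ^ 2 ≤ 12 * Real.log m * B := by
    calc m * y ^ 2 ≤ m * (12 * Real.log m * (B / m)) := by
          gcongr
          exact (Real.sq_le (by positivity)).2 (abs_le.1 hy)
      _ = 12 * Real.log m * B := by field_simp
  calc m * (x + y) ^ 2 ≤ 2 * (m * x ^ 2) + 2 * (m * y ^ 2) := by
        nlinarith [mul_nonneg hm0.le (sq_nonneg (x - y))]
    _ ≤ 28 * Real.log m * B := by nlinarith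

variable [NeZero m]

/-- The coordinates `1, …, l - 1`, which carry the free signs of `spikeVector`. -/
def spikeIndex (m l : ℕ) [NeZero m] : Finset (Fin m) := {j | j ≠ 0 ∧ (j : ℕ) < l}

lemma mem_spikeIndex {j : Fin m} : j ∈ spikeIndex m l ↔ j ≠ 0 ∧ (j : ℕ) < l := by
  simp [spikeIndex]

lemma card_spikeIndex (hl : 0 < l) (hlm : l ≤ m) : #(spikeIndex m l) = l - 1 := by
  have herase : spikeIndex m l = ({j : Fin m | (j : ℕ) < l} : Finset (Fin m)).erase 0 := by
    ext j
    simp [mem_spikeIndex]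
  rw [herase, Finset.card_erase_of_mem (by simpa using hl), Fin.card_filter_val_lt,
    min_eq_right hlm]

/-- The vector `e₀ + l^{-1/2} ∑_{0 < j < l} ±eⱼ` with signs `σ`. The fixed coordinate `e₀` makes
the signs visible in row `0` of the rank-one matrix it spans. -/
def spikeVector (l : ℕ) (σ : Fin m → Bool) (j : Fin m) : ℝ :=
  if j = 0 then 1 else if j ∈ spikeIndex m l then boolSign (σ j) / √l else 0

lemma spikeVector_zero (σ : Fin m → Bool) : spikeVector l σ 0 = 1 := if_pos rfl

lemma spikeVector_of_mem (σ : Fin m → Bool) {j : Fin m} (hj : j ∈ spikeIndex m l) :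
    spikeVector l σ j = boolSign (σ j) / √l := by
  rw [spikeVector, if_neg (mem_spikeIndex.1 hj).1, if_pos hj]

lemma spikeVector_of_le (hl : 0 < l) (σ : Fin m → Bool) {j : Fin m} (hj : l ≤ j) :
    spikeVector l σ j = 0 := by
  have hj0 : j ≠ 0 := fun h => by simp [h] at hj; omega
  rw [spikeVector, if_neg hj0, if_neg fun h => hj.not_gt (mem_spikeIndex.1 h).2]

lemma sum_sq_spikeVector_le (hl : 0 < l) (hlm : l ≤ m) (σ : Fin m → Bool) :
    ∑ j, spikeVector l σ j ^ 2 ≤ 2 := by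
  have hsq : ∀ j, spikeVector l σ j ^ 2 =
      (if j = 0 then 1 else 0) + if j ∈ spikeIndex m l then 1 / (l : ℝ) else 0 := by
    intro j
    by_cases hj : j ∈ spikeIndex m l
    · rw [spikeVector_of_mem σ hj, div_pow, boolSign_sq, Real.sq_sqrt l.cast_nonneg, if_pos hj,
        if_neg (mem_spikeIndex.1 hj).1, zero_add]
    · by_cases hj0 : j = 0
      · simp [hj0, spikeVector, mem_spikeIndex]
      · simp [hj0, hj, spikeVector]
  calc ∑ j, spikeVector l σ j ^ 2 = 1 + ((l - 1 : ℕ) : ℝ) / l := by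
        simp only [hsq, Finset.sum_add_distrib, Finset.sum_ite_eq', Finset.mem_univ, if_true,
          Finset.sum_ite_mem, Finset.univ_inter, Finset.sum_const, card_spikeIndex hl hlm,
          nsmul_eq_mul, mul_one_div]
    _ ≤ 1 + 1 := by
        gcongr
        exact div_le_one_of_le₀ (by exact_mod_cast Nat.sub_le l 1) l.cast_nonneg
    _ = 2 := one_add_one_eq_two

lemma sum_sq_spikeVector_sub_flipAt (l : ℕ) (σ : Fin m → Bool) {i : Fin m}
    (hi : i ∈ spikeIndex m l) :
    ∑ j, (spikeVector l σ j - spikeVector l (flipAt i σ) j) ^ 2 = 4 / l := by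
  rw [Fintype.sum_eq_single i]
  · rw [spikeVector_of_mem _ hi, spikeVector_of_mem _ hi, flipAt_self, boolSign_not, neg_div,
      sub_neg_eq_add, ← two_mul, mul_pow, div_pow, boolSign_sq, Real.sq_sqrt l.cast_nonneg]
    ring
  · intro j hj
    rw [spikeVector, spikeVector, flipAt_of_ne hj, sub_self, zero_pow two_ne_zero]

lemma spikeVector_vecMul_eigenMatrix (l : ℕ) (φ : ℕ → Fin m → ℝ) (σ : Fin m → Bool) (u : Fin m) :
    (spikeVector l σ ᵥ* eigenMatrix φ) u = eigenMatrix φ 0 u +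
      rademacherSum (fun j => if j ∈ spikeIndex m l then eigenMatrix φ j u / √l else 0) σ := by
  have hterm : ∀ j, spikeVector l σ j * eigenMatrix φ j u =
      (if j = 0 then eigenMatrix φ 0 u else 0) +
        boolSign (σ j) * if j ∈ spikeIndex m l then eigenMatrix φ j u / √l else 0 := by
    intro j
    by_cases hj : j ∈ spikeIndex m l
    · rw [spikeVector_of_mem σ hj, if_neg (mem_spikeIndex.1 hj).1, if_pos hj]
      ring
    · by_cases hj0 : j = 0
      · simp [hj0, spikeVector, mem_spikeIndex]
      · simp [hj0, hj, spikeVector]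
  simp only [Matrix.vecMul, dotProduct, rademacherSum, hterm, Finset.sum_add_distrib,
    Finset.sum_ite_eq', Finset.mem_univ, if_true]

lemma sq_spikeVector_vecMul_eigenMatrix_le (hl : 0 < l) (hlm : l ≤ m)
    (hB : ∀ j v, m * eigenMatrix φ j v ^ 2 ≤ B) (σ : Fin m → Bool) (u : Fin m) :
    m * (spikeVector l σ ᵥ* eigenMatrix φ) u ^ 2 ≤ 2 * l * B := by
  set J : Finset (Fin m) := {j | (j : ℕ) < l}
  have hrestrict : (spikeVector l σ ᵥ* eigenMatrix φ) u =
      ∑ j ∈ J, spikeVector l σ j * eigenMatrix φ j u := by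
    refine (Finset.sum_subset (Finset.subset_univ J) fun j _ hj => ?_).symm
    rw [spikeVector_of_le hl σ (by simpa [J] using hj), zero_mul]
  have hcard : #J = l := by rw [Fin.card_filter_val_lt, min_eq_right hlm]
  calc m * (spikeVector l σ ᵥ* eigenMatrix φ) u ^ 2
      ≤ m * ((∑ j ∈ J, spikeVector l σ j ^ 2) *
          ∑ j ∈ J, eigenMatrix φ j u ^ 2) := by
        rw [hrestrict]
        gcongr
        exact Finset.sum_mul_sq_le_sq_mul_sq _ _ _
    _ = (∑ j ∈ J, spikeVector l σ j ^ 2) *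
          ∑ j ∈ J, m * eigenMatrix φ j u ^ 2 := by
        rw [← Finset.mul_sum]
        ring
    _ ≤ 2 * (l * B) := by
        gcongr
        · exact (Finset.sum_le_univ_sum_of_nonneg fun _ => sq_nonneg _).trans
            (sum_sq_spikeVector_le hl hlm σ)
        · refine (Finset.sum_le_card_nsmul _ _ B fun j _ => hB j u).trans_eq ?_
          rw [hcard, nsmul_eq_mul]
    _ = 2 * l * B := by ring

lemma four_mul_card_exists_lt_abs_rademacherSum_spike_le (hm : 2 ≤ m) (hl : 0 < l) (hlm : l ≤ m)
    (hB0 : 0 < B) (hB : ∀ j v, m * eigenMatrix φ j v ^ 2 ≤ B) :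
    4 * #{σ | ∃ u, √(12 * Real.log m * (B / m)) < |rademacherSum
      (fun j => if j ∈ spikeIndex m l then eigenMatrix φ j u / √l else 0) σ|} ≤
      2 ^ Fintype.card (Fin m) := by
  have hlog : 0 < Real.log m := Real.log_pos (by exact_mod_cast hm)
  have hm0 : (0 : ℝ) < m := Nat.cast_pos.2 (by omega)
  have hl0 : (0 : ℝ) < l := Nat.cast_pos.2 hl
  have hcard : Fintype.card (Fin m) ≤ m ^ 2 := by
    rw [Fintype.card_fin]
    exact Nat.le_self_pow two_ne_zero m
  have hV : 0 < B / m := div_pos hB0 hm0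
  have ht : 12 * Real.log m * (B / m) ≤ √(12 * Real.log m * (B / m)) ^ 2 :=
    (Real.sq_sqrt (by positivity)).ge
  have hoeffding := four_mul_card_exists_lt_abs_rademacherSum_le hm (Y := Fin m)
    (x := fun u j => if j ∈ spikeIndex m l then eigenMatrix φ j u / √l else 0)
    hcard hV (Real.sqrt_nonneg _) (fun u => ?_) ht
  · convert hoeffding
  calc ∑ j, (if j ∈ spikeIndex m l then eigenMatrix φ j u / √l else 0) ^ 2
      = ∑ j ∈ spikeIndex m l, eigenMatrix φ j u ^ 2 / l := by
        simp only [ite_pow, zero_pow two_ne_zero, Finset.sum_ite_mem, Finset.univ_inter, div_pow,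
          Real.sq_sqrt l.cast_nonneg]
    _ ≤ #(spikeIndex m l) • (B / m / l) := by
        refine Finset.sum_le_card_nsmul _ _ _ fun j _ => ?_
        gcongr
        exact (le_div_iff₀' hm0).2 (hB j u)
    _ ≤ l * (B / m / l) := by
        rw [card_spikeIndex hl hlm, nsmul_eq_mul]
        gcongr
        exact Nat.sub_le l 1
    _ = B / m := mul_div_cancel₀ _ hl0.ne'

lemma four_mul_card_exists_lt_abs_kernelOfCoeffs_spike_le (hm : 2 ≤ m) (hl : 0 < l) (hlm : l ≤ m)
    (ha : 0 ≤ a) (hB0 : 0 < B) (hB : ∀ j v, m * eigenMatrix φ j v ^ 2 ≤ B)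
    (hτ : 224 * (τ ^ 2 * B ^ 2 * l * Real.log m) ≤ a ^ 2 * m ^ 2) :
    4 * #{σ | ∃ u v, a / 2 < |kernelOfCoeffs φ
      (τ • Matrix.vecMulVec (spikeVector l σ) (spikeVector l σ)) u v|} ≤
      2 ^ Fintype.card (Fin m) := by
  have hm0 : (0 : ℝ) < m := Nat.cast_pos.2 (by omega)
  have hlog : 0 < Real.log m := Real.log_pos (by exact_mod_cast hm)
  refine le_trans ?_ (four_mul_card_exists_lt_abs_rademacherSum_spike_le hm hl hlm hB0 hB)
  refine Nat.mul_le_mul_left 4 (Finset.card_le_card (Finset.monotone_filter_right _ ?_))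
  rintro σ - ⟨u, v, huv⟩
  by_contra! hsmall
  refine huv.not_ge (abs_le_of_sq_le_sq ?_ (by positivity))
  have hu : m * (spikeVector l σ ᵥ* eigenMatrix φ) u ^ 2 ≤ 28 * Real.log m * B := by
    rw [spikeVector_vecMul_eigenMatrix]
    exact sq_add_le_of_abs_le_sqrt hm (hB 0 u) (hsmall u)
  have hv := sq_spikeVector_vecMul_eigenMatrix_le hl hlm hB σ v
  rw [kernelOfCoeffs_smul_vecMulVec_self_apply]
  set g := spikeVector l σ ᵥ* eigenMatrix φ
  refine le_of_mul_le_mul_right ?_ (pow_pos hm0 2)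
  calc (τ * (g u * g v)) ^ 2 * m ^ 2 = τ ^ 2 * ((m * g u ^ 2) * (m * g v ^ 2)) := by ring
    _ ≤ τ ^ 2 * ((28 * Real.log m * B) * (2 * l * B)) := by gcongr
    _ ≤ (a / 2) ^ 2 * m ^ 2 := by linarith

lemma IsAdmissibleRate.spike_flip_le (hD : IsAdmissibleRate m n 1 l ρ a Λ B D) (hn : 1 ≤ n)
    (hl : 0 < l) (hlm : l ≤ m) (hτ : 512 * τ ^ 2 = D * m ^ 2) (σ : Fin m → Bool) {i : Fin m}
    (hi : i ∈ spikeIndex m l) :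
    hsNormSq (τ • Matrix.vecMulVec (spikeVector l σ) (spikeVector l σ) -
      τ • Matrix.vecMulVec (spikeVector l (flipAt i σ)) (spikeVector l (flipAt i σ))) ≤
      2 * a ^ 2 * m ^ 2 / n := by
  have hdist := hsNormSq_vecMulVec_self_sub_le (spikeVector l σ) (spikeVector l (flipAt i σ))
  rw [sum_sq_spikeVector_sub_flipAt l σ hi] at hdist
  rw [← smul_sub, hsNormSq_smul, le_div_iff₀ (by exact_mod_cast hn)]
  calc _ ≤ τ ^ 2 * (2 * (2 + 2) * (4 / l)) * n := by
        gcongr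
        refine hdist.trans ?_
        gcongr
        · exact sum_sq_spikeVector_le hl hlm σ
        · exact sum_sq_spikeVector_le hl hlm (flipAt i σ)
    _ = D * n * (m ^ 2 / (16 * l)) := by
        field_simp
        linear_combination hτ
    _ ≤ a ^ 2 * (1 : ℕ) * l * (m ^ 2 / (16 * l)) := by
        gcongr ?_ * _
        exact hD.undetected
    _ = a ^ 2 * m ^ 2 / 16 := by
        rw [Nat.cast_one]
        field_simp
    _ ≤ 2 * a ^ 2 * m ^ 2 := by nlinarith [mul_nonneg (sq_nonneg a) (sq_nonneg (m : ℝ))]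

lemma isSignPacking_spike (hD : IsAdmissibleRate m n 1 l ρ a Λ B D) (hn : 1 ≤ n) (hΛ : 0 ≤ Λ)
    (hr : 1 ≤ r) (hl : 0 < l) (hlm : l ≤ m) (hτ : 512 * τ ^ 2 = D * m ^ 2) :
    IsSignPacking n r l ρ a Λ (τ / √l) (spikeIndex m l) (fun j => (0, j)) fun σ =>
      τ • Matrix.vecMulVec (spikeVector l σ) (spikeVector l σ) where
  injOn := (Prod.mk_right_injective 0).injOn
  entry σ j hj := by
    rw [Matrix.smul_apply, Matrix.vecMulVec_apply, spikeVector_zero, spikeVector_of_mem σ hj,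
      smul_eq_mul]
    ring
  isSymm σ := by
    rw [Matrix.IsSymm, Matrix.transpose_smul, Matrix.transpose_vecMulVec]
  rank_le σ := by
    rw [← Matrix.smul_vecMulVec]
    exact (Matrix.rank_vecMulVec_le _ _).trans hr
  support σ j k hk := by
    rw [Matrix.smul_apply, Matrix.vecMulVec_apply, spikeVector_of_le hl σ hk, mul_zero, smul_zero]
  smooth σ := by
    have hnorm := sum_sq_spikeVector_le hl hlm σ
    rw [hsNormSq_smul, hsNormSq_vecMulVec]
    calc _ ≤ Λ * (τ ^ 2 * (2 * 2)) := by gcongr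
      _ = Λ * D * m ^ 2 / 128 := by linear_combination Λ * 4 / 512 * hτ
      _ ≤ ρ ^ 2 * m ^ 2 := by
          have := mul_le_mul_of_nonneg_right hD.smooth (sq_nonneg (m : ℝ))
          have : 0 ≤ ρ ^ 2 * (m : ℝ) ^ 2 := by positivity
          linarith
  flip σ i hi := hD.spike_flip_le hn hl hlm hτ σ hi

lemma one_le_of_mul_sq_eigenMatrix_le (hφ : OrthonormalFamily m φ)
    (hB : ∀ j v, m * eigenMatrix φ j v ^ 2 ≤ B) : 1 ≤ B := by
  have hm0 : (0 : ℝ) < m := Nat.cast_pos.2 (NeZero.pos m)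
  have hnorm : ∑ v, eigenMatrix φ 0 v ^ 2 = 1 := by
    simpa [Matrix.mul_apply, sq] using congrFun (congrFun (eigenMatrix_mul_transpose hφ) 0) 0
  have hsum : ∑ v, m * eigenMatrix φ 0 v ^ 2 ≤ ∑ _v : Fin m, B :=
    Finset.sum_le_sum fun v _ => hB 0 v
  rw [← Finset.mul_sum, hnorm, Finset.sum_const, Finset.card_univ, Fintype.card_fin,
    nsmul_eq_mul] at hsum
  exact le_of_mul_le_mul_left hsum hm0

lemma IsAdmissibleRate.existsHardLaw_of_eq_one
    (hD : IsAdmissibleRate m n 1 l ρ a Λ B D) (hn : 1 ≤ n) (ha : 0 < a)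
    (hφ : OrthonormalFamily m φ) (hΛ : 0 ≤ Λ) (hlam : ∀ k, 1 ≤ k → k ≤ l → lam k ≤ Λ)
    (hB : ∀ j v, m * eigenMatrix φ j v ^ 2 ≤ B) (hr : 1 ≤ r) (hl : 2 ≤ l)
    (hlm : l ≤ m) (Shat : (Fin n → Obs m) → Matrix (Fin m) (Fin m) ℝ) :
    ExistsHardLaw r ρ a lam φ (D / 196608) Shat := by
  set τ := √(D * m ^ 2 / 512)
  have hl0 : (0 : ℝ) < l := Nat.cast_pos.2 (by omega)
  have hm0 : (0 : ℝ) < m := Nat.cast_pos.2 (by omega)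
  have hτ : 512 * τ ^ 2 = D * m ^ 2 := by
    rw [Real.sq_sqrt (div_nonneg (mul_nonneg hD.nonneg (sq_nonneg _)) (by norm_num))]
    field_simp
  have hcard : #(spikeIndex m l) = l - 1 := card_spikeIndex (by omega) hlm
  have le_card : (l : ℝ) ≤ 2 * #(spikeIndex m l) := by exact_mod_cast (by omega)
  refine ((isSignPacking_spike hD hn hΛ hr (by omega) hlm hτ).existsHardLaw hn ha (by positivity)
    hφ hlam (Finset.card_pos.1 (by omega)) (four_mul_card_exists_lt_abs_kernelOfCoeffs_spike_le
    (by omega) (by omega) hlm ha.le (one_pos.trans_le (one_le_of_mul_sq_eigenMatrix_le hφ hB)) hB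
    ?_) Shat).mono ?_
  · calc 224 * (τ ^ 2 * B ^ 2 * l * Real.log m)
        = D * B ^ 2 * l * Real.log m * (7 / 16 * m ^ 2) := by
          linear_combination 224 / 512 * B ^ 2 * l * Real.log m * hτ
      _ ≤ a ^ 2 * (1 : ℕ) * (1 * m ^ 2) := by
          gcongr ?_ * (?_ * _)
          · exact hD.bounded
          · norm_num
      _ = a ^ 2 * m ^ 2 := by
          rw [Nat.cast_one]
          ring
  · rw [le_div_iff₀ (by positivity), div_pow, Real.sq_sqrt hl0.le, le_div_iff₀ (by norm_num),
      div_mul_eq_mul_div _ _ (#(spikeIndex m l) : ℝ), le_div_iff₀ hl0]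
    nlinarith [mul_le_mul_of_nonneg_left le_card (sq_nonneg τ)]

end Spike

/-! ### The rate `δₙ⁽²⁾` -/

section Rate

variable {m n r l0 l : ℕ} {c p ρ a Q Λ B D K : ℝ} {lam : ℕ → ℝ} {φ : ℕ → Fin m → ℝ}

lemma rpow_sum_div_le_Qp (p : ℝ) (φ : ℕ → Fin m → ℝ) {j : ℕ} (hj : j ∈ Finset.Icc 1 m) :
    ((∑ v, |√m * φ j v| ^ p) / m) ^ (2 / p) ≤ Qp m p φ := by
  let q (j : ℕ) : ℝ := ((∑ v, |√m * φ j v| ^ p) / m) ^ (2 / p)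
  have hq : ∀ j, 0 ≤ q j := fun j => by positivity
  have hbdd : BddAbove (Set.range fun j => ⨆ _ : j ∈ Finset.Icc 1 m, q j) := by
    refine ⟨∑ j ∈ Finset.Icc 1 m, q j, ?_⟩
    rintro _ ⟨i, rfl⟩
    exact Real.iSup_le (fun hi => Finset.single_le_sum (fun k _ => hq k) hi)
      (Finset.sum_nonneg fun k _ => hq k)
  calc q j = ⨆ _ : j ∈ Finset.Icc 1 m, q j := by rw [ciSup_pos hj]
    _ ≤ Qp m p φ := le_ciSup hbdd j

lemma mul_sq_le_rpow_mul_Qp (hp : 0 < p) (φ : ℕ → Fin m → ℝ) {j : ℕ} (hj : j ∈ Finset.Icc 1 m)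
    (v : Fin m) : m * φ j v ^ 2 ≤ (m : ℝ) ^ (2 / p) * Qp m p φ := by
  have hm0 : (0 : ℝ) < m := Nat.cast_pos.2 v.pos
  have hpow : (|√m * φ j v| ^ p) ^ (2 / p) = m * φ j v ^ 2 := by
    rw [← Real.rpow_mul (abs_nonneg _), mul_div_cancel₀ _ hp.ne', Real.rpow_two, sq_abs, mul_pow,
      Real.sq_sqrt hm0.le]
  rw [← div_le_iff₀' (by positivity), ← hpow, ← Real.div_rpow (by positivity) hm0.le]
  refine le_trans ?_ (rpow_sum_div_le_Qp p φ hj)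
  gcongr
  exact Finset.single_le_sum (f := fun v => |√m * φ j v| ^ p) (fun _ _ => by positivity)
    (Finset.mem_univ v)

lemma mul_sq_eigenMatrix_le_exp_two_mul_Qp (hm : 2 ≤ m) (φ : ℕ → Fin m → ℝ) (j v : Fin m) :
    m * eigenMatrix φ j v ^ 2 ≤ Real.exp 2 * Qp m (Real.log m) φ := by
  have hlog : 0 < Real.log m := Real.log_pos (by exact_mod_cast hm)
  have hexp : (m : ℝ) ^ (2 / Real.log m) = Real.exp 2 := by
    rw [Real.rpow_def_of_pos (by positivity), mul_div_cancel₀ _ hlog.ne']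
  rw [← hexp]
  exact mul_sq_le_rpow_mul_Qp hlog φ (by simp) v

lemma IsAdmissibleRate.div_sq {R : ℕ} (hD : IsAdmissibleRate m n R l ρ a Λ Q D) (hΛ : 0 ≤ Λ)
    (hK : 1 ≤ K) : IsAdmissibleRate m n R l ρ a Λ (K * Q) (D / K ^ 2) where
  nonneg := div_nonneg hD.nonneg (sq_nonneg K)
  undetected := by
    refine le_trans ?_ hD.undetected
    gcongr
    exact div_le_self hD.nonneg (one_le_pow₀ hK)
  smooth := by
    refine le_trans ?_ hD.smooth
    gcongr
    exact div_le_self hD.nonneg (one_le_pow₀ hK)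
  bounded := by
    refine le_trans (le_of_eq ?_) hD.bounded
    field_simp

lemma IsAdmissibleRate.one_to_two (hD : IsAdmissibleRate m n 1 1 ρ a Λ B D) (hc : 1 ≤ c) :
    IsAdmissibleRate m n 1 2 ρ a (c * Λ) B (D / (2 * c)) where
  nonneg := div_nonneg hD.nonneg (by positivity)
  undetected := by
    have hle : D / (2 * c) ≤ D := div_le_self hD.nonneg (by linarith)
    calc D / (2 * c) * n ≤ D * n := by gcongr
      _ ≤ a ^ 2 * (1 : ℕ) * (1 : ℕ) := hD.undetected
      _ ≤ a ^ 2 * (1 : ℕ) * (2 : ℕ) := by gcongr; norm_num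
  smooth := by
    calc c * Λ * (D / (2 * c)) = Λ * D / 2 := by field_simp
      _ ≤ ρ ^ 2 := by linarith [hD.smooth, sq_nonneg ρ]
  bounded := by
    have hD0 := hD.nonneg
    calc D / (2 * c) * B ^ 2 * (2 : ℕ) * Real.log m
        = D * B ^ 2 * (1 : ℕ) * Real.log m / c := by
          push_cast
          field_simp
      _ ≤ D * B ^ 2 * (1 : ℕ) * Real.log m :=
          div_le_self (by positivity) hc
      _ ≤ a ^ 2 * (1 : ℕ) := hD.bounded

/-- The term of index `l` in the maximum defining `δₙ⁽²⁾`. -/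
def delta2Term (m n r : ℕ) (ρ a Q : ℝ) (lam : ℕ → ℝ) (l : ℕ) : ℝ≥0∞ :=
  min (ENNReal.ofReal (a ^ 2 * (min r l : ℝ) * (l : ℝ) / n))
    (min (ENNReal.ofReal (ρ ^ 2) / ENNReal.ofReal (lam l))
      (ENNReal.ofReal ((1 / Q ^ 2) * (a ^ 2 * (min r l : ℝ) / l) * (1 / Real.log m))))

lemma exists_delta2_eq_delta2Term (n r : ℕ) (ρ a Q : ℝ) (lam : ℕ → ℝ) (hl0m : l0 ≤ m) :
    ∃ l ∈ Finset.Icc l0 m, delta2 m n r l0 ρ a Q lam = delta2Term m n r ρ a Q lam l := by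
  have hsup : delta2 m n r l0 ρ a Q lam =
      (Finset.Icc l0 m).sup (delta2Term m n r ρ a Q lam) := (Finset.sup_eq_iSup _ _).symm
  rw [hsup]
  exact Finset.exists_mem_eq_sup _ (Finset.nonempty_Icc.2 hl0m) _

lemma delta2Term_ne_top : delta2Term m n r ρ a Q lam l ≠ ⊤ :=
  ne_top_of_le_ne_top ENNReal.ofReal_ne_top (min_le_left _ _)

lemma isAdmissibleRate_delta2Term (hm : 2 ≤ m) (hn : 1 ≤ n) (hl : 1 ≤ l) (hQ : 0 < Q)
    (hlam : 0 ≤ lam l) :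
    IsAdmissibleRate m n (min r l) l ρ a (lam l) Q (delta2Term m n r ρ a Q lam l).toReal := by
  have hlog : 0 < Real.log m := Real.log_pos (by exact_mod_cast hm)
  have hn0 : (0 : ℝ) < n := Nat.cast_pos.2 hn
  refine ⟨ENNReal.toReal_nonneg, ?_, ?_, ?_⟩
  · rw [Nat.cast_min, ← le_div_iff₀ hn0]
    exact ENNReal.toReal_le_of_le_ofReal (by positivity) (min_le_left _ _)
  · rcases hlam.eq_or_lt with hzero | hpos
    · rw [← hzero, zero_mul]
      exact sq_nonneg ρ
    · rw [← le_div_iff₀' hpos]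
      refine ENNReal.toReal_le_of_le_ofReal (by positivity) ?_
      rw [ENNReal.ofReal_div_of_pos hpos]
      exact (min_le_right _ _).trans (min_le_left _ _)
  · have hle : (delta2Term m n r ρ a Q lam l).toReal ≤
        1 / Q ^ 2 * (a ^ 2 * min (r : ℝ) l / l) * (1 / Real.log m) :=
      ENNReal.toReal_le_of_le_ofReal (by positivity) ((min_le_right _ _).trans (min_le_right _ _))
    rw [Nat.cast_min]
    calc (delta2Term m n r ρ a Q lam l).toReal * Q ^ 2 * l * Real.log m
        ≤ 1 / Q ^ 2 * (a ^ 2 * min (r : ℝ) l / l) * (1 / Real.log m) * Q ^ 2 * l * Real.log m := by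
          gcongr
      _ = a ^ 2 * min (r : ℝ) l := by field_simp

end Rate

/-! ### The lower bound -/

section LowerBound

variable {m n r k0 l0 l : ℕ} {c ρ a B D Λ : ℝ} {lam : ℕ → ℝ} {φ : ℕ → Fin m → ℝ}

lemma IsAdmissibleRate.existsHardLaw [NeZero m]
    (hD : IsAdmissibleRate m n (min r l) l ρ a Λ B D) (hn : 1 ≤ n) (ha : 0 < a)
    (hφ : OrthonormalFamily m φ) (hΛ : 0 ≤ Λ) (hlam : ∀ k, 1 ≤ k → k ≤ l → lam k ≤ Λ)
    (hB : ∀ j v, m * eigenMatrix φ j v ^ 2 ≤ B) (hr : 1 ≤ r) (hl : 2 ≤ l) (hlm : l ≤ m)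
    (Shat : (Fin n → Obs m) → Matrix (Fin m) (Fin m) ℝ) :
    ExistsHardLaw r ρ a lam φ (D / 196608) Shat := by
  rcases hr.eq_or_lt with rfl | hr2
  · rw [min_eq_left (by omega)] at hD
    exact hD.existsHardLaw_of_eq_one hn ha hφ hΛ hlam hB le_rfl hl hlm Shat
  · exact hD.existsHardLaw_of_two_le hn ha hφ hΛ hlam hB (le_min hr2 hl) (min_le_left _ _)
      (min_le_right _ _) hlm Shat

-- For `l = 1` there is no sign to hide, so the packing lives at level `2`, where `λ₂ ≤ c λ₁`.
lemma IsEigenData.existsHardLaw [NeZero m] (H : IsEigenData m c lam φ k0) (hc : 1 ≤ c)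
    (hD : IsAdmissibleRate m n (min r l) l ρ a (lam l) B D) (hm : 2 ≤ m) (hn : 1 ≤ n) (ha : 0 < a)
    (hB : ∀ j v, m * eigenMatrix φ j v ^ 2 ≤ B) (hr : 1 ≤ r) (hl : min k0 2 ≤ l) (hlm : l ≤ m)
    (Shat : (Fin n → Obs m) → Matrix (Fin m) (Fin m) ℝ) :
    ExistsHardLaw r ρ a lam φ (D / (2 * c) / 196608) Shat := by
  have hk0 := H.k0_mem.1
  have hnonneg := H.nonneg l (Finset.mem_Icc.2 ⟨by omega, hlm⟩)
  rcases le_or_gt 2 l with hl2 | hl2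
  · refine (hD.existsHardLaw hn ha H.orth hnonneg (fun k hk hkl => H.mono k l hk hkl hlm) hB hr hl2
      hlm Shat).mono ?_
    gcongr
    exact div_le_self hD.nonneg (by linarith)
  · obtain rfl : l = 1 := by omega
    rw [min_eq_right hr] at hD
    have hratio : lam 2 ≤ c * lam 1 := H.ratio 1 (by omega) hm
    refine (hD.one_to_two hc).existsHardLaw_of_eq_one hn ha H.orth (by positivity)
      (fun k hk hk2 => ?_) hB hr le_rfl hm Shat
    exact (H.mono k 2 hk hk2 hm).trans hratio

theorem minimax_lower_bound_logm_general (hc : 1 ≤ c) (hm : 2 ≤ m) (hn : 1 ≤ n) (hr : 1 ≤ r)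
    (ha : 0 < a) (H : IsEigenData m c lam φ k0) (hl0 : min k0 2 ≤ l0) (hl0m : l0 ≤ m)
    (Shat : (Fin n → Obs m) → Matrix (Fin m) (Fin m) ℝ) :
    ∃ P : Measure (Obs m), MemP m r ρ a lam φ P ∧
      ENNReal.ofReal (1 / 64) ≤ (Measure.pi fun _ : Fin n => P)
        {ω | ENNReal.ofReal (1 / (196608 * (2 * c) * Real.exp 2 ^ 2)) *
            delta2 m n r l0 ρ a (Qp m (Real.log m) φ) lam ≤
          ENNReal.ofReal (l2PiSq (Shat ω - regKernel m P))} := by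
  have : NeZero m := ⟨by omega⟩
  have hk0 := H.k0_mem.1
  have hB := mul_sq_eigenMatrix_le_exp_two_mul_Qp hm φ
  have hQ : 0 < Qp m (Real.log m) φ := pos_of_mul_pos_right
    (one_pos.trans_le (one_le_of_mul_sq_eigenMatrix_le H.orth hB)) (Real.exp_pos 2).le
  obtain ⟨l, hl, hdelta⟩ := exists_delta2_eq_delta2Term n r ρ a (Qp m (Real.log m) φ) lam hl0m
  obtain ⟨hl0l, hlm⟩ := Finset.mem_Icc.1 hl
  have hlam := H.nonneg l (Finset.mem_Icc.2 ⟨by omega, hlm⟩)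
  have hD := (isAdmissibleRate_delta2Term (r := r) (ρ := ρ) (a := a) hm hn (by omega) hQ
    hlam).div_sq hlam (Real.one_le_exp zero_le_two)
  obtain ⟨P, hP, hprob⟩ := H.existsHardLaw hc hD hm hn ha hB hr (hl0.trans hl0l) hlm Shat
  refine ⟨P, hP, hprob.trans (measure_mono fun ω hω => ?_)⟩
  rw [Set.mem_ofPred_eq, hdelta, ← ENNReal.ofReal_toReal delta2Term_ne_top,
    ← ENNReal.ofReal_mul (by positivity)]
  refine ENNReal.ofReal_le_ofReal (le_trans (le_of_eq ?_) hω)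
  field_simp

end LowerBound

/-- **Corollary 1 (minimax lower bound with `p = log m`).** -/
theorem minimax_lower_bound_logm (c : ℝ) (hc : 1 ≤ c) :
    ∃ c₁ > (0 : ℝ), ∃ c₂ > (0 : ℝ),
      ∀ (m n r k0 : ℕ) (ρ a : ℝ) (lam : ℕ → ℝ) (φ : ℕ → Fin m → ℝ),
        1 ≤ m → 1 ≤ n → 1 ≤ r → r ≤ m → 0 < ρ → 0 < a →
        2 ≤ Real.log m →
        IsEigenData m c lam φ k0 →
        ∀ Shat : (Fin n → Obs m) → Matrix (Fin m) (Fin m) ℝ,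
          (∀ u v : Fin m, Measurable fun ω => Shat ω u v) →
          ENNReal.ofReal c₂ ≤
            ⨆ (P : Measure (Obs m)) (_ : MemP m r ρ a lam φ P),
              (Measure.pi fun _ : Fin n => P)
                {ω | ENNReal.ofReal c₁ *
                    delta2 m n r (min k0 32) ρ a (Qp m (Real.log m) φ) lam ≤
                  ENNReal.ofReal (l2PiSq (Shat ω - regKernel m P))} := by
  refine ⟨1 / (196608 * (2 * c) * Real.exp 2 ^ 2), by positivity, 1 / 64, by norm_num, ?_⟩
  intro m n r k0 ρ a lam φ _ hn hr _ _ ha hlog H Shat _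
  have hm : 2 ≤ m := by exact_mod_cast (Real.log_pos_iff m.cast_nonneg).1 (two_pos.trans_le hlog)
  obtain ⟨P, hP, hprob⟩ := minimax_lower_bound_logm_general hc hm hn hr ha H
    (l0 := min k0 32) (by omega) (min_le_of_left_le H.k0_mem.2.1) Shat
  exact hprob.trans (le_iSup₂_of_le P hP le_rfl)

end
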